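/- arXiv:1110.1963 — 3 statements merged into one kernel-verified Lean document; each statement's English description precedes it below -/
import Mathlib

section
/- Let d be a positive integer and I a square-free monomial ideal of S minimally generated by μ(I) > 1 square-free monomials of degree d. If μ(I) ≥ ρ_{d+1}(I) — in particular if μ(I) ≥ C(n, d+1) — then depth_S I = d. -/
open MvPolynomial

/-- The square-free monomial `∏ i ∈ T, X i` associated to a set `T` of variables. -/
noncomputable def sqMon (K : Type) [Field K] {n : ℕ} (T : Finset (Fin n)) :
    MvPolynomial (Fin n) K :=
  ∏ i ∈ T, X i

/-- `GenBySqMonOfDeg K P I` means: `I` is generated by square-free monomials whose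
degrees satisfy the predicate `P`. -/
def GenBySqMonOfDeg (K : Type) [Field K] {n : ℕ} (P : ℕ → Prop)
    (I : Ideal (MvPolynomial (Fin n) K)) : Prop :=
  ∃ G : Set (Finset (Fin n)), (∀ T ∈ G, P T.card) ∧ I = Ideal.span (sqMon K '' G)

/-- `rho K d I` : the number of square-free monomials of degree `d` belonging to `I`. -/
noncomputable def rho (K : Type) [Field K] {n : ℕ} (d : ℕ)
    (I : Ideal (MvPolynomial (Fin n) K)) : ℕ :=
  Set.ncard {T : Finset (Fin n) | T.card = d ∧ sqMon K T ∈ I}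

/-- The maximal graded ideal `(x_1, …, x_n)` of `K[x_1, …, x_n]`. -/
noncomputable def maxGraded (K : Type) [Field K] (n : ℕ) :
    Ideal (MvPolynomial (Fin n) K) :=
  Ideal.span (Set.range (X : Fin n → MvPolynomial (Fin n) K))

/-- The depth of the module `M` with respect to the ideal `I` : the supremum of the
lengths of `M`-regular sequences consisting of elements of `I`. -/
noncomputable def moduleDepth {R : Type} [CommRing R] (I : Ideal R)
    (M : Type) [AddCommGroup M] [Module R M] : ℕ∞ :=
  sSup {k : ℕ∞ | ∃ rs : List R, k = (rs.length : ℕ∞) ∧ (∀ r ∈ rs, r ∈ I) ∧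
    RingTheory.Sequence.IsRegular M rs}

/-- The `R`-module `I/J` (more precisely `I/(I ∩ J)`, which is `I/J` when `J ≤ I`). -/
noncomputable abbrev idealQuot {R : Type} [CommRing R] (I J : Ideal R) : Type :=
  ↥I ⧸ (Submodule.comap I.subtype (J : Submodule R R))

namespace KZ

open Finset

def cnt {n : ℕ} (i : Fin n) (U : Finset (Fin n)) : ℕ := (U.filter (· < i)).card

def sg (R : Type) [CommRing R] {n : ℕ} (i : Fin n) (U : Finset (Fin n)) : R := (-1) ^ cnt i U

section
variable {R : Type} [CommRing R] {n : ℕ}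

lemma sg_mul_self (i : Fin n) (U : Finset (Fin n)) : sg R i U * sg R i U = 1 := by
  unfold sg
  rw [← pow_add, ← two_mul, pow_mul]; simp

lemma cnt_erase_self (i : Fin n) (U : Finset (Fin n)) : cnt i (U.erase i) = cnt i U := by
  unfold cnt
  congr 1
  ext j; simp only [mem_filter, mem_erase]
  constructor
  · rintro ⟨⟨_, h⟩, h'⟩; exact ⟨h, h'⟩
  · rintro ⟨h, h'⟩; exact ⟨⟨h'.ne, h⟩, h'⟩

lemma sg_erase_self (i : Fin n) (U : Finset (Fin n)) : sg R i (U.erase i) = sg R i U := by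
  unfold sg; rw [cnt_erase_self]

lemma cnt_erase_lt {i j : Fin n} {U : Finset (Fin n)} (hj : j ∈ U) (h : j < i) :
    cnt i (U.erase j) + 1 = cnt i U := by
  unfold cnt
  rw [Finset.filter_erase]
  exact Finset.card_erase_add_one (by simp [hj, h])

lemma cnt_erase_gt {i j : Fin n} {U : Finset (Fin n)} (h : i < j) :
    cnt i (U.erase j) = cnt i U := by
  unfold cnt
  rw [Finset.filter_erase, Finset.erase_eq_of_notMem]
  simp [h.le]

lemma sg_erase_lt {i j : Fin n} {U : Finset (Fin n)} (hj : j ∈ U) (h : j < i) :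
    sg R i (U.erase j) = - sg R i U := by
  unfold sg
  rw [← cnt_erase_lt hj h, pow_succ]; ring

lemma sg_erase_gt {i j : Fin n} {U : Finset (Fin n)} (h : i < j) :
    sg R i (U.erase j) = sg R i U := by
  unfold sg; rw [cnt_erase_gt h]

lemma sg_swap {i j : Fin n} {U : Finset (Fin n)} (hi : i ∈ U) (hj : j ∈ U) (h : i ≠ j) :
    sg R i U * sg R j (U.erase i) = - (sg R j U * sg R i (U.erase j)) := by
  rcases lt_or_gt_of_ne h with h | h
  · rw [sg_erase_lt hi h, sg_erase_gt h]; ring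
  · rw [sg_erase_lt hj h, sg_erase_gt h]; ring

lemma sg_swap' {i j : Fin n} {U : Finset (Fin n)} (hi : i ∈ U) (hj : j ∈ U) (h : i ≠ j) :
    sg R i U * sg R j U = - (sg R j (U.erase i) * sg R i (U.erase j)) := by
  rcases lt_or_gt_of_ne h with h | h
  · rw [sg_erase_lt hi h, sg_erase_gt h]; ring
  · rw [sg_erase_lt hj h, sg_erase_gt h]; ring

variable {M : Type} [AddCommGroup M] [Module R M]

def del (a : Fin n → R) (f : Finset (Fin n) → M) (U : Finset (Fin n)) : M :=
  ∑ i ∈ U, (sg R i U * a i) • f (U.erase i)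

variable (R) in
def iot (i : Fin n) (f : Finset (Fin n) → M) (U : Finset (Fin n)) : M :=
  if i ∈ U then 0 else sg R i U • f (insert i U)

lemma del_congr {a : Fin n → R} {f g : Finset (Fin n) → M} {p : ℕ}
    (h : ∀ U, U.card = p → f U = g U) {U : Finset (Fin n)} (hU : U.card = p + 1) :
    del a f U = del a g U := by
  unfold del
  refine Finset.sum_congr rfl fun i hi => ?_
  rw [h _ (by rw [Finset.card_erase_of_mem hi, hU]; rfl)]

lemma del_add (a : Fin n → R) (f g : Finset (Fin n) → M) (U) :
    del a (fun T => f T + g T) U = del a f U + del a g U := by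
  simp [del, Finset.sum_add_distrib]

lemma del_smul (a : Fin n → R) (r : R) (f : Finset (Fin n) → M) (U) :
    del a (fun T => r • f T) U = r • del a f U := by
  simp only [del, Finset.smul_sum]
  exact Finset.sum_congr rfl fun i _ => smul_comm _ _ _

lemma del_zero (a : Fin n → R) (U) :
    del a (fun _ => (0 : M)) U = 0 := by
  simp [del]

lemma del_sum {ι : Type} (s : Finset ι) (a : Fin n → R) (f : ι → Finset (Fin n) → M) (U) :
    del a (fun T => ∑ k ∈ s, f k T) U = ∑ k ∈ s, del a (f k) U := by
  simp only [del, Finset.smul_sum]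
  exact Finset.sum_comm

lemma del_map {N : Type} [AddCommGroup N] [Module R N] (φ : M →ₗ[R] N) (a : Fin n → R)
    (f : Finset (Fin n) → M) (U) : del a (fun T => φ (f T)) U = φ (del a f U) := by
  simp [del]

lemma del_del (a : Fin n → R) (f : Finset (Fin n) → M) (U) : del a (del a f) U = 0 := by
  unfold del
  simp only [Finset.smul_sum, smul_smul]
  rw [Finset.sum_sigma']
  refine Finset.sum_involution (fun x _ => ⟨x.2, x.1⟩) ?_ ?_ ?_ ?_
  · rintro ⟨i, j⟩ h
    simp only [mem_sigma, mem_erase] at h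
    obtain ⟨hi, hji, hj⟩ := h
    simp only
    rw [Finset.erase_right_comm, ← add_smul]
    have := sg_swap (R := R) hi hj (Ne.symm hji)
    have h2 : sg R i U * a i * (sg R j (U.erase i) * a j) +
      sg R j U * a j * (sg R i (U.erase j) * a i) = 0 := by linear_combination (a i * a j) * this
    rw [h2, zero_smul]
  · rintro ⟨i, j⟩ h _ heq
    simp only [mem_sigma, mem_erase] at h
    simp only [Sigma.mk.injEq, heq_eq_eq] at heq
    exact h.2.1 heq.1
  · rintro ⟨i, j⟩ h
    simp only [mem_sigma, mem_erase] at h ⊢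
    exact ⟨h.2.2, Ne.symm h.2.1, h.1⟩
  · rintro ⟨i, j⟩ h
    rfl

lemma homotopy (a : Fin n → R) (i : Fin n) (f : Finset (Fin n) → M) (U) :
    del a (iot R i f) U + iot R i (del a f) U = a i • f U := by
  by_cases hi : i ∈ U
  · have h1 : iot R i (del a f) U = 0 := by simp [iot, hi]
    rw [h1, add_zero]
    unfold del
    rw [Finset.sum_eq_single i]
    · simp only [iot, Finset.notMem_erase, if_false, smul_smul, Finset.insert_erase hi]
      rw [sg_erase_self]
      congr 1
      linear_combination (a i) * sg_mul_self (R := R) i U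
    · intro j hj hji
      have : i ∈ U.erase j := by simp [hi, Ne.symm hji]
      simp [iot, this]
    · intro h; exact absurd hi h
  · have h1 : iot R i (del a f) U = sg R i U • del a f (insert i U) := by simp [iot, hi]
    rw [h1]
    unfold del
    rw [Finset.sum_insert hi, smul_add, add_comm, add_assoc, Finset.smul_sum,
      ← Finset.sum_add_distrib]
    rw [Finset.sum_eq_zero, add_zero, smul_smul, Finset.erase_insert hi]
    · have := sg_erase_self (R := R) i (insert i U)
      rw [Finset.erase_insert hi] at this
      rw [← this]
      congr 1
      linear_combination (a i) * sg_mul_self (R := R) i U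
    · intro j hj
      have hji : i ≠ j := fun h => hi (h ▸ hj)
      have hn : i ∉ U.erase j := by simp [hi]
      simp only [iot, hn, if_false, smul_smul]
      rw [Finset.erase_insert_of_ne hji, ← add_smul]
      have := sg_swap' (R := R) (U := insert i U) (Finset.mem_insert_self i U)
        (Finset.mem_insert_of_mem hj) hji
      have e1 := sg_erase_self (R := R) i (insert i U)
      have e2 := sg_erase_self (R := R) i ((insert i U).erase j)
      rw [Finset.erase_insert_of_ne hji, Finset.erase_insert hn] at e2
      rw [Finset.erase_insert hi] at this e1
      rw [Finset.erase_insert_of_ne hji] at this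
      rw [e1, e2]
      have h0 : sg R i (insert i U) * (sg R j (insert i U) * a j) +
          sg R j U * a j * sg R i (insert i (U.erase j)) = 0 := by
        linear_combination (a j) * this
      rw [h0, zero_smul]

/-- vanishing of Koszul cohomology in degree `p` -/
def KV (a : Fin n → R) (M : Type) [AddCommGroup M] [Module R M] (p : ℕ) : Prop :=
  ∀ z : Finset (Fin n) → M, (∀ U, U.card = p + 1 → del a z U = 0) →
    ∃ w : Finset (Fin n) → M, ∀ U, U.card = p → del a w U = z U

lemma smul_bdry (a : Fin n → R) {r : R} (hr : r ∈ Ideal.span (Set.range a)) {p : ℕ}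
    (z : Finset (Fin n) → M) (hz : ∀ U, U.card = p + 1 → del a z U = 0) :
    ∃ w : Finset (Fin n) → M, ∀ U, U.card = p → del a w U = r • z U := by
  obtain ⟨c, rfl⟩ := Ideal.mem_span_range_iff_exists_fun.1 hr
  refine ⟨fun T => ∑ i, c i • iot R i z T, fun U hU => ?_⟩
  rw [del_sum, Finset.sum_smul]
  refine Finset.sum_congr rfl fun i _ => ?_
  rw [del_smul, mul_smul, ← homotopy a i z U]
  congr 1
  have : iot R i (del a z) U = 0 := by
    unfold iot
    split_ifs with h
    · rfl
    · rw [hz _ (by rw [Finset.card_insert_of_notMem h, hU]), smul_zero]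
  rw [this, add_zero]

open RingTheory.Sequence

open scoped Pointwise in
/-- the quotient map -/
def qm (r : R) (M : Type) [AddCommGroup M] [Module R M] : M →ₗ[R] QuotSMulTop r M :=
  Submodule.mkQ (r • (⊤ : Submodule R M))

open scoped Pointwise in
lemma qm_surj (r : R) : Function.Surjective (qm r M) :=
  Submodule.mkQ_surjective (r • (⊤ : Submodule R M))

open scoped Pointwise in
lemma qm_eq_zero (r : R) (x : M) : qm r M x = 0 ↔ ∃ b : M, r • b = x := by
  have : qm r M x = 0 ↔ x ∈ r • (⊤ : Submodule R M) :=
    Submodule.Quotient.mk_eq_zero (r • (⊤ : Submodule R M))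
  rw [this, Submodule.mem_smul_pointwise_iff_exists]
  simp

lemma lift_quot (r : R) (w : Finset (Fin n) → M) (a : Fin n → R) (p : ℕ)
    (h : ∃ v : Finset (Fin n) → QuotSMulTop r M, ∀ U, U.card = p →
      del a v U = qm r M (w U)) :
    ∃ v u : Finset (Fin n) → M, ∀ U, U.card = p → w U = del a v U + r • u U := by
  obtain ⟨v', hv'⟩ := h
  have hs : ∀ T, ∃ x : M, qm r M x = v' T :=
    fun T => qm_surj r _
  choose v hv using hs
  have : ∀ U : Finset (Fin n), ∃ u : M, U.card = p → w U = del a v U + r • u := by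
    intro U
    by_cases hU : U.card = p
    · have h1 := hv' U hU
      have h2 := del_map (qm r M) a v U
      simp only [hv] at h2
      rw [show del a (fun T => v' T) U = del a v' U from rfl] at h2
      have h3 : qm r M (w U) =
        qm r M (del a v U) := h1.symm.trans h2
      rw [← sub_eq_zero, ← map_sub, qm_eq_zero] at h3
      obtain ⟨b, hb⟩ := h3
      exact ⟨b, fun _ => by rw [hb]; abel⟩
    · exact ⟨0, fun h => absurd h hU⟩
  choose u hu using this
  exact ⟨v, u, hu⟩

lemma KV_of_regular (a : Fin n → R) : ∀ (rs : List R) (M : Type) [AddCommGroup M] [Module R M],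
    (∀ r ∈ rs, r ∈ Ideal.span (Set.range a)) → IsWeaklyRegular M rs →
    ∀ p, p < rs.length → KV a M p
  | [], _, _, _, _, _, p, hp => by simp at hp
  | r :: rs, M, _, _, hm, hr, p, hp => by
    rw [isWeaklyRegular_cons_iff] at hr
    intro z hz
    obtain ⟨w, hw⟩ := smul_bdry a (hm r (by simp)) z hz
    cases p with
    | zero =>
      refine ⟨0, fun U hU => ?_⟩
      have h1 := hw U hU
      rw [Finset.card_eq_zero] at hU
      subst hU
      have h0 : r • z ∅ = r • (0 : M) := by rw [← h1]; simp [del]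
      rw [hr.1 h0]; simp [del]
    | succ p =>
      have ih := KV_of_regular a rs (QuotSMulTop r M) (fun s hs => hm s (by simp [hs])) hr.2 p
        (by simpa using hp)
      have h1 := ih (fun T => qm r M (w T)) (fun U hU => by
        refine (del_map (qm r M) a w U).trans ?_
        rw [hw U hU, qm_eq_zero]
        exact ⟨_, rfl⟩)
      obtain ⟨v, u, huv⟩ := lift_quot r w a p h1
      refine ⟨u, fun U hU => ?_⟩
      apply hr.1
      change r • del a u U = r • z U
      rw [← hw U hU, del_congr huv hU, del_add, del_smul]
      have := del_del a v U
      rw [show del a (fun T => del a v T) U = del a (del a v) U from rfl, this, zero_add]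

lemma regular_of_KV [IsNoetherianRing R] (a : Fin n → R) :
    ∀ (k : ℕ) (M : Type) [AddCommGroup M] [Module R M] [Module.Finite R M],
    (∀ p, p < k → KV a M p) → ∃ rs : List R, rs.length = k ∧
      (∀ r ∈ rs, r ∈ Ideal.span (Set.range a)) ∧ IsWeaklyRegular M rs
  | 0, M, _, _, _, _ => ⟨[], rfl, by simp, IsWeaklyRegular.nil R M⟩
  | k + 1, M, _, _, _, hK => by
    have h0 : ∀ x : M, (∀ i, a i • x = 0) → x = 0 := by
      intro x hx
      obtain ⟨w, hw⟩ := hK 0 (by omega) (fun _ => x) (fun U _ => by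
        unfold del
        exact Finset.sum_eq_zero fun i _ => by rw [mul_smul, hx, smul_zero])
      have := hw ∅ rfl
      simpa [del] using this.symm
    have h1 : ∃ r ∈ Ideal.span (Set.range a), IsSMulRegular M r := by
      by_contra hcon
      push Not at hcon
      have hsub : ((Ideal.span (Set.range a) : Ideal R) : Set R) ⊆
          ⋃ p ∈ associatedPrimes R M, (id p : Ideal R) := by
        simp only [id]
        rw [biUnion_associatedPrimes_eq_zero_divisors R M]
        intro r hr
        by_contra hr'
        refine hcon r hr ?_
        rw [isSMulRegular_iff_right_eq_zero_of_smul]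
        intro x hx
        by_contra hx0
        exact hr' ⟨x, hx0, hx⟩
      obtain ⟨P, hP, hle⟩ := (Ideal.subset_union_prime_finite (associatedPrimes.finite R M)
        (f := id) 0 0 (fun _ h _ _ => h.1)).1 hsub
      rw [AssociatedPrimes.mem_iff, isAssociatedPrime_iff] at hP
      obtain ⟨hprime, x, hx⟩ := hP
      have hx0 : x = 0 := h0 x fun i => by
        have : a i ∈ P := hle (Ideal.subset_span ⟨i, rfl⟩)
        rw [hx] at this
        simpa using this
      apply hprime.ne_top
      rw [hx, hx0]; simp
    obtain ⟨r, hrm, hr⟩ := h1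
    obtain ⟨rs, hl, hm, hreg⟩ := regular_of_KV a k (QuotSMulTop r M) (fun p hp z hz => by
      obtain ⟨z', hz'⟩ : ∃ z' : Finset (Fin n) → M, ∀ T,
          qm r M (z' T) = z T :=
        ⟨fun T => (qm_surj r (z T)).choose,
          fun T => (qm_surj r (z T)).choose_spec⟩
      have hy : ∀ U : Finset (Fin n), ∃ y : M, U.card = p + 1 → del a z' U = r • y := by
        intro U
        by_cases hU : U.card = p + 1
        · have h1 := del_map (qm r M) a z' U
          simp only [hz'] at h1
          have h2 := h1.symm.trans (hz U hU)
          rw [qm_eq_zero] at h2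
          obtain ⟨b, hb⟩ := h2
          exact ⟨b, fun _ => hb.symm⟩
        · exact ⟨0, fun h => absurd h hU⟩
      choose y hy using hy
      obtain ⟨u, hu⟩ := hK (p + 1) (by omega) y (fun U hU => by
        apply hr
        change r • del a y U = r • 0
        rw [smul_zero, ← del_smul, ← del_del a z' U]
        exact (del_congr hy hU).symm)
      obtain ⟨v, hv⟩ := hK p (by omega) (fun T => z' T + (-r) • u T) (fun U hU => by
        rw [del_add, del_smul, hu U hU]
        have : del a (fun T => z' T) U = r • y U := hy U hU
        rw [this, neg_smul, add_neg_cancel])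
      refine ⟨fun T => qm r M (v T), fun U hU => ?_⟩
      refine (del_map (qm r M) a v U).trans ?_
      rw [hv U hU, map_add, hz']
      have : qm r M (-r • u U) = 0 := by
        rw [qm_eq_zero]
        exact ⟨-u U, by simp⟩
      rw [this, add_zero])
    refine ⟨r :: rs, by simp [hl], ?_, ?_⟩
    · intro s hs
      rcases List.mem_cons.1 hs with rfl | hs
      · exact hrm
      · exact hm s hs
    · exact (isWeaklyRegular_cons_iff M r rs).2 ⟨hr, hreg⟩

end

section
variable {K : Type} [Field K] {n : ℕ}

lemma exists_cocycle {d : ℕ} (G B : Finset (Finset (Fin n))) (hGd : ∀ T ∈ G, T.card = d)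
    (hB : ∀ U, U ∈ B ↔ U.card = d + 1 ∧ ∃ T ∈ G, T ⊆ U)
    (hG1 : 1 < G.card) (hmu : B.card ≤ G.card) :
    ∃ c : Finset (Fin n) → K, (∀ T, T ∉ G → c T = 0) ∧ (∃ T ∈ G, c T ≠ 0) ∧
      ∀ U, U.card = d + 1 → del (fun _ => (1 : K)) c U = 0 := by
  classical
  let ext : (G → K) → Finset (Fin n) → K := fun c T => if h : T ∈ G then c ⟨T, h⟩ else 0
  let D : (G → K) →ₗ[K] (B → K) :=
    { toFun := fun c U => del (fun _ => (1 : K)) (ext c) U.1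
      map_add' := fun c c' => by
        funext U
        simp only [Pi.add_apply]
        rw [← del_add]
        congr 1
        funext T
        simp only [ext]
        split_ifs <;> simp
      map_smul' := fun r c => by
        funext U
        simp only [Pi.smul_apply, RingHom.id_apply]
        rw [← del_smul]
        congr 1
        funext T
        simp only [ext]
        split_ifs <;> simp }
  have hout : ∀ (c : G → K) (U : Finset (Fin n)), U.card = d + 1 → U ∉ B →
      del (fun _ => (1 : K)) (ext c) U = 0 := by
    intro c U hU hUB
    unfold del
    refine Finset.sum_eq_zero fun i hi => ?_
    have : U.erase i ∉ G := fun h => hUB ((hB U).2 ⟨hU, _, h, Finset.erase_subset _ _⟩)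
    simp [ext, this]
  by_cases hinj : Function.Injective D
  · exfalso
    have hle : G.card ≤ B.card := by
      have := LinearMap.finrank_le_finrank_of_injective hinj
      simpa using this
    have hsurj : Function.Surjective D := by
      refine (LinearMap.injective_iff_surjective_of_finrank_eq_finrank ?_).1 hinj
      simp [le_antisymm hle hmu]
    obtain ⟨U0, hU0, U1, hU1, hne⟩ := Finset.one_lt_card.1 (lt_of_lt_of_le hG1 hle)
    have hU0d := ((hB U0).1 hU0).1
    have hU1d := ((hB U1).1 hU1).1
    obtain ⟨i, hi⟩ : ∃ i, i ∉ U0 := by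
      by_contra hcon
      push Not at hcon
      have : U0 = Finset.univ := Finset.eq_univ_iff_forall.2 hcon
      have h2 : U1 ⊆ U0 := fun x _ => hcon x
      exact hne (Finset.eq_of_subset_of_card_le h2 (by omega)).symm
    obtain ⟨c, hc⟩ := hsurj (fun U => if U.1 = U0 then 1 else 0)
    have hc' : ∀ U, U.card = d + 1 → del (fun _ => (1 : K)) (ext c) U = if U = U0 then 1 else 0 := by
      intro U hU
      by_cases hUB : U ∈ B
      · exact congrFun hc ⟨U, hUB⟩
      · rw [hout c U hU hUB, if_neg]
        rintro rfl
        exact hUB hU0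
    have h0 := del_del (fun _ => (1 : K)) (ext c) (insert i U0)
    rw [del_congr hc' (by rw [Finset.card_insert_of_notMem hi, hU0d])] at h0
    unfold del at h0
    rw [Finset.sum_eq_single i] at h0
    · rw [Finset.erase_insert hi] at h0
      simp [sg] at h0
    · intro j hj hji
      have : (insert i U0).erase j ≠ U0 := fun h => by
        apply hi
        rw [← h]
        simp [Ne.symm hji]
      simp [this]
    · simp
  · rw [← LinearMap.ker_eq_bot, ← ne_eq, Submodule.ne_bot_iff] at hinj
    obtain ⟨c, hc, hc0⟩ := hinj
    refine ⟨ext c, fun T hT => by simp [ext, hT], ?_, ?_⟩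
    · by_contra hcon
      push Not at hcon
      apply hc0
      funext T
      have := hcon T.1 T.2
      simpa [ext] using this
    · intro U hU
      by_cases hUB : U ∈ B
      · exact congrFun (LinearMap.mem_ker.1 hc) ⟨U, hUB⟩
      · exact hout c U hU hUB

/-- exponent vector -/
noncomputable def ev (T : Finset (Fin n)) : Fin n →₀ ℕ := ∑ i ∈ T, Finsupp.single i 1

lemma ev_apply (T : Finset (Fin n)) (j : Fin n) : ev T j = if j ∈ T then 1 else 0 := by
  simp [ev, Finsupp.finsetSum_apply, Finsupp.single_apply]

lemma sqMon_eq (T : Finset (Fin n)) : sqMon K T = monomial (ev T) 1 := by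
  unfold sqMon ev
  rw [MvPolynomial.monomial_sum_one]
  rfl

lemma sqMon_ne (T : Finset (Fin n)) : sqMon K T ≠ 0 := by
  rw [sqMon_eq]; simp

lemma mem_I (G : Finset (Finset (Fin n))) (f : MvPolynomial (Fin n) K) :
    f ∈ Ideal.span (sqMon K '' (G : Set (Finset (Fin n)))) ↔
      ∀ m, coeff m f ≠ 0 → ∃ T ∈ G, ∀ i ∈ T, m i ≠ 0 := by
  have : (sqMon K '' (G : Set (Finset (Fin n)))) =
      (fun s => monomial s (1 : K)) '' (ev '' (G : Set (Finset (Fin n)))) := by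
    rw [Set.image_image]
    refine Set.image_congr fun T _ => sqMon_eq T
  rw [this, MvPolynomial.mem_ideal_span_monomial_image]
  simp only [MvPolynomial.mem_support_iff, Set.mem_image, SetLike.mem_coe, exists_exists_and_eq_and]
  refine forall_congr' fun m => imp_congr_right fun _ => exists_congr fun T =>
    and_congr_right fun _ => ?_
  rw [Finsupp.le_def]
  refine forall_congr' fun i => ?_
  rw [ev_apply]
  split_ifs with h <;> simp [h, Nat.one_le_iff_ne_zero]

lemma sqMon_mem (G : Finset (Finset (Fin n))) (U : Finset (Fin n)) :
    sqMon K U ∈ Ideal.span (sqMon K '' (G : Set (Finset (Fin n)))) ↔ ∃ T ∈ G, T ⊆ U := by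
  rw [mem_I, sqMon_eq]
  simp only [coeff_monomial]
  constructor
  · intro h
    obtain ⟨T, hT, h⟩ := h (ev U) (by simp)
    refine ⟨T, hT, fun i hi => ?_⟩
    have := h i hi
    rw [ev_apply] at this
    by_contra hc
    simp [hc] at this
  · rintro ⟨T, hT, h⟩ m hm
    have : ev U = m := by
      by_contra hc
      simp [hc] at hm
    subst this
    exact ⟨T, hT, fun i hi => by simp [ev_apply, h hi]⟩

lemma coeff_mI {d : ℕ} (G : Finset (Finset (Fin n))) (hGd : ∀ T ∈ G, T.card = d)
    (f : MvPolynomial (Fin n) K) (hf : f ∈ Ideal.span (sqMon K '' (G : Set (Finset (Fin n)))))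
    (r : MvPolynomial (Fin n) K) (hr : r ∈ maxGraded K n) (T : Finset (Fin n)) (hT : T.card = d) :
    coeff (ev T) (r * f) = 0 := by
  classical
  obtain ⟨c, rfl⟩ := Ideal.mem_span_range_iff_exists_fun.1 hr
  rw [Finset.sum_mul, coeff_sum]
  refine Finset.sum_eq_zero fun i _ => ?_
  rw [mul_comm (c i), mul_assoc, coeff_X_mul']
  split_ifs with h
  · by_contra hne
    obtain ⟨T', hT', h'⟩ := (mem_I G _).1 (Ideal.mul_mem_left _ (c i) hf) _ hne
    have hi : i ∈ T := by
      by_contra hc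
      simp [ev_apply, hc] at h
    have hsub : T' ⊆ T.erase i := by
      intro j hj
      have := h' j hj
      rw [Finsupp.tsub_apply, ev_apply, Finsupp.single_apply] at this
      rw [Finset.mem_erase]
      constructor
      · rintro rfl
        simp [hi] at this
      · by_contra hc
        simp [hc] at this
    have := Finset.card_le_card hsub
    rw [hGd T' hT', Finset.card_erase_of_mem hi, hT] at this
    have : 0 < T.card := Finset.card_pos.2 ⟨i, hi⟩
    omega
  · rfl

lemma sg_alg (i : Fin n) (U : Finset (Fin n)) :
    C (sg K i U) = sg (MvPolynomial (Fin n) K) i U := by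
  simp [sg]

lemma sqMon_erase {i : Fin n} {U : Finset (Fin n)} (hi : i ∈ U) :
    X i * sqMon K (U.erase i) = sqMon K U := by
  unfold sqMon
  exact Finset.mul_prod_erase U _ hi

lemma not_KV {d : ℕ} (G : Finset (Finset (Fin n))) (hGd : ∀ T ∈ G, T.card = d)
    (c : Finset (Fin n) → K) (hc : ∀ T, T ∉ G → c T = 0) (hc1 : ∃ T ∈ G, c T ≠ 0)
    (hc2 : ∀ U, U.card = d + 1 → del (fun _ => (1 : K)) c U = 0) :
    ¬ KV (X : Fin n → MvPolynomial (Fin n) K)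
      (Ideal.span (sqMon K '' (G : Set (Finset (Fin n))))) d := by
  intro hK
  have hmem : ∀ T, C (c T) * sqMon K T ∈ Ideal.span (sqMon K '' (G : Set (Finset (Fin n)))) := by
    intro T
    by_cases hT : T ∈ G
    · exact Ideal.mul_mem_left _ _ (Ideal.subset_span ⟨T, hT, rfl⟩)
    · simp [hc T hT]
  obtain ⟨w, hw⟩ := hK (fun T => ⟨_, hmem T⟩) (fun U hU => by
    apply Subtype.ext
    have h1 := del_map (Submodule.subtype (Ideal.span (sqMon K '' (G : Set (Finset (Fin n))))))
      (X : Fin n → MvPolynomial (Fin n) K) (fun T => ⟨_, hmem T⟩) U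
    refine h1.symm.trans ?_
    have h2 : del (X : Fin n → MvPolynomial (Fin n) K) (fun T => C (c T) * sqMon K T) U =
        C (del (fun _ => (1 : K)) c U) * sqMon K U := by
      unfold del
      rw [map_sum, Finset.sum_mul]
      refine Finset.sum_congr rfl fun i hi => ?_
      rw [← sqMon_erase hi, ← sg_alg, smul_eq_mul, smul_eq_mul, mul_one, map_mul]
      ring
    refine h2.trans ?_
    rw [hc2 U hU]; simp)
  obtain ⟨T, hT, hcT⟩ := hc1
  have h1 := congrArg Subtype.val (hw T (hGd T hT))
  have h2 := del_map (Submodule.subtype (Ideal.span (sqMon K '' (G : Set (Finset (Fin n))))))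
      (X : Fin n → MvPolynomial (Fin n) K) w T
  have h3 := congrArg (coeff (ev T)) (h2.trans h1)
  unfold del at h3
  rw [coeff_sum, Finset.sum_eq_zero] at h3
  · simp only at h3
    rw [coeff_C_mul, sqMon_eq] at h3
    simp at h3
    exact hcT h3.symm
  · intro i _
    rw [smul_eq_mul]
    refine coeff_mI G hGd _ (w (T.erase i)).2 _ ?_ T (hGd T hT)
    exact Ideal.mul_mem_left _ _ (Ideal.subset_span ⟨i, rfl⟩)

open Classical in
/-- choose an index with exponent at least two -/
noncomputable def idx (b : Fin n →₀ ℕ) : Option (Fin n) :=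
  if h : ∃ i, 2 ≤ b i then some h.choose else none

lemma idx_some {b : Fin n →₀ ℕ} {i : Fin n} (h : idx b = some i) : 2 ≤ b i := by
  unfold idx at h
  split_ifs at h with h'
  · rw [Option.some_inj] at h
    rw [← h]
    exact h'.choose_spec

lemma idx_none {b : Fin n →₀ ℕ} (h : idx b = none) (i : Fin n) : b i ≤ 1 := by
  unfold idx at h
  split_ifs at h with h'
  push Not at h'
  have := h' i
  omega

open Classical in
noncomputable def prj0 (i : Fin n) (f : MvPolynomial (Fin n) K) : MvPolynomial (Fin n) K :=
  ∑ b ∈ f.support.filter (fun b => idx b = some i), monomial b (coeff b f)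

lemma coeff_prj0 (i : Fin n) (f : MvPolynomial (Fin n) K) (b) :
    coeff b (prj0 i f) = if idx b = some i then coeff b f else 0 := by
  classical
  unfold prj0
  rw [coeff_sum]
  simp only [coeff_monomial]
  rw [Finset.sum_ite_eq']
  simp only [Finset.mem_filter, MvPolynomial.mem_support_iff]
  by_cases h : idx b = some i <;> by_cases h2 : coeff b f = 0 <;> simp [h, h2]

noncomputable def prj (i : Fin n) : MvPolynomial (Fin n) K →ₗ[K] MvPolynomial (Fin n) K where
  toFun := prj0 i
  map_add' f g := by
    ext b
    simp only [coeff_prj0, coeff_add]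
    split_ifs <;> simp
  map_smul' r f := by
    ext b
    simp only [coeff_prj0, coeff_smul, RingHom.id_apply]
    split_ifs <;> simp

lemma coeff_prj (i : Fin n) (f : MvPolynomial (Fin n) K) (b) :
    coeff b (prj i f) = if idx b = some i then coeff b f else 0 := coeff_prj0 i f b

lemma factor (G : Finset (Finset (Fin n))) (V : Finset (Fin n)) (f : MvPolynomial (Fin n) K)
    (hf : ∀ b, coeff b f ≠ 0 → ev V ≤ b ∧ ∃ T ∈ G, ∀ i ∈ T, (b - ev V) i ≠ 0) :
    ∃ w : Ideal.span (sqMon K '' (G : Set (Finset (Fin n)))),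
      sqMon K V * (w : MvPolynomial (Fin n) K) = f := by
  classical
  refine ⟨⟨∑ b ∈ f.support, monomial (b - ev V) (coeff b f), ?_⟩, ?_⟩
  · refine Ideal.sum_mem _ fun b hb => ?_
    rw [mem_I]
    intro m hm
    rw [coeff_monomial] at hm
    have : b - ev V = m := by
      by_contra hc
      simp [hc] at hm
    subst this
    exact (hf b (MvPolynomial.mem_support_iff.1 hb)).2
  · simp only
    conv_rhs => rw [MvPolynomial.as_sum f]
    rw [Finset.mul_sum]
    refine Finset.sum_congr rfl fun b hb => ?_
    rw [sqMon_eq, monomial_mul, one_mul,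
      add_tsub_cancel_of_le (hf b (MvPolynomial.mem_support_iff.1 hb)).1]

lemma del_twist (f : Finset (Fin n) → MvPolynomial (Fin n) K) (U) :
    del (fun _ => (1 : K)) (fun T => sqMon K Tᶜ * f T) U =
      sqMon K Uᶜ * del (X : Fin n → MvPolynomial (Fin n) K) f U := by
  unfold del
  rw [Finset.mul_sum]
  refine Finset.sum_congr rfl fun i hi => ?_
  have h1 : (U.erase i)ᶜ = insert i Uᶜ := Finset.compl_erase
  have h2 : sqMon K (insert i Uᶜ) = X i * sqMon K Uᶜ := by
    rw [← sqMon_erase (Finset.mem_insert_self i Uᶜ), Finset.erase_insert (by simpa using hi)]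
  simp only
  rw [h1, h2, ← sg_alg, mul_one, smul_eq_mul, MvPolynomial.smul_eq_C_mul]
  ring

lemma KV_I {d : ℕ} (G : Finset (Finset (Fin n))) (hGd : ∀ T ∈ G, T.card = d) (p : ℕ) (hp : p < d) :
    KV (X : Fin n → MvPolynomial (Fin n) K)
      (Ideal.span (sqMon K '' (G : Set (Finset (Fin n))))) p := by
  classical
  generalize hI : Ideal.span (sqMon K '' (G : Set (Finset (Fin n)))) = I
  intro z hz
  let Z : Finset (Fin n) → MvPolynomial (Fin n) K := fun T => sqMon K Tᶜ * (z T : MvPolynomial (Fin n) K)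
  have hZc : ∀ T b, coeff b (Z T) ≠ 0 → ev Tᶜ ≤ b ∧ ∃ T' ∈ G, ∀ i ∈ T', (b - ev Tᶜ) i ≠ 0 := by
    intro T b hb
    simp only [Z] at hb
    rw [sqMon_eq, coeff_monomial_mul'] at hb
    split_ifs at hb with h
    · rw [one_mul] at hb
      exact ⟨h, (mem_I G _).1 (hI ▸ (z T).2) _ hb⟩
    · exact absurd rfl hb
  have hZ : ∀ U, U.card = p + 1 → del (fun _ => (1 : K)) Z U = 0 := by
    intro U hU
    rw [del_twist]
    have h1 := del_map (Submodule.subtype I) (X : Fin n → MvPolynomial (Fin n) K) z U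
    rw [hz U hU] at h1
    have h2 : del (X : Fin n → MvPolynomial (Fin n) K)
      (fun T => (z T : MvPolynomial (Fin n) K)) U = 0 := h1
    rw [h2, mul_zero]
  have hw : ∀ (i : Fin n) (U : Finset (Fin n)), ∃ w : I,
      sqMon K Uᶜ * (w : MvPolynomial (Fin n) K) = iot K i (fun T => prj i (Z T)) U := by
    intro i U
    subst hI
    apply factor
    intro b hb
    unfold iot at hb
    split_ifs at hb with hiU
    · simp at hb
    · rw [coeff_smul, coeff_prj] at hb
      split_ifs at hb with hid
      · have hb2 := right_ne_zero_of_smul hb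
        obtain ⟨h1, T, hT, h2⟩ := hZc _ _ hb2
        have h3 := idx_some hid
        have key : ∀ j, j ≠ i → ev (insert i U)ᶜ j = ev Uᶜ j := by
          intro j hj
          simp [ev_apply, hj]
        refine ⟨?_, T, hT, fun j hj => ?_⟩
        · rw [Finsupp.le_def] at h1 ⊢
          intro j
          by_cases hji : j = i
          · subst hji
            rw [ev_apply]; split_ifs <;> omega
          · rw [← key j hji]; exact h1 j
        · have := h2 j hj
          rw [Finsupp.tsub_apply] at this ⊢
          by_cases hji : j = i
          · subst hji
            rw [ev_apply]; split_ifs <;> omega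
          · rw [← key j hji]; exact this
      · simp at hb
  choose w hw using hw
  refine ⟨fun U => ∑ i, w i U, fun U hU => ?_⟩
  apply Subtype.ext
  apply mul_left_cancel₀ (sqMon_ne (K := K) Uᶜ)
  have h1 := del_map (Submodule.subtype I) (X : Fin n → MvPolynomial (Fin n) K)
    (fun U => ∑ i, w i U) U
  have h2 : ((del (X : Fin n → MvPolynomial (Fin n) K) (fun U => ∑ i, w i U) U : I) :
      MvPolynomial (Fin n) K) = _ := h1.symm
  rw [h2, ← del_twist]
  have h3 : (fun T : Finset (Fin n) => sqMon K Tᶜ * (Submodule.subtype I) (∑ i, w i T)) =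
      fun T => ∑ i, iot K i (fun T => prj i (Z T)) T := by
    funext T
    rw [map_sum, Finset.mul_sum]
    exact Finset.sum_congr rfl fun i _ => hw i T
  rw [h3, del_sum]
  have h4 : ∀ i, del (fun _ => (1 : K)) (iot K i (fun T => prj i (Z T))) U = prj i (Z U) := by
    intro i
    have := homotopy (fun _ => (1 : K)) i (fun T => prj i (Z T)) U
    rw [one_smul] at this
    rw [← this]
    have h0 : iot K i (del (fun _ => (1 : K)) (fun T => prj i (Z T))) U = 0 := by
      unfold iot
      split_ifs with h
      · rfl
      · rw [del_map, hZ _ (by rw [Finset.card_insert_of_notMem h, hU]), map_zero, smul_zero]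
    rw [h0, add_zero]
  simp only [h4]
  change ∑ i, prj i (Z U) = Z U
  ext b
  rw [coeff_sum]
  simp only [coeff_prj]
  rcases hb : idx b with _ | i
  · simp only [reduceCtorEq, if_false, Finset.sum_const_zero]
    symm
    by_contra hne
    obtain ⟨h1, T, hT, h2⟩ := hZc _ _ hne
    have hsub : T ⊆ U := by
      intro j hj
      have h3 := h2 j hj
      have h4 := idx_none hb j
      by_contra hc
      rw [Finsupp.tsub_apply, ev_apply] at h3
      simp [hc] at h3
      omega
    have := Finset.card_le_card hsub
    rw [hGd T hT, hU] at this
    omega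
  · simp [Option.some_inj]

end

end KZ

/-- Corollary 3.4.  Since all minimal generators of `I` are the
`μ(I)` distinct square-free monomials of the same degree `d`, a minimal system of
generators of `I` is exactly a finite set `G` of distinct square-free monomials of
degree `d` spanning `I`, and `μ(I) = G.card`. -/
theorem stmt_15 (n : ℕ) (K : Type) [Field K] (d : ℕ) (hd : 0 < d)
    (I : Ideal (MvPolynomial (Fin n) K)) (G : Finset (Finset (Fin n)))
    (hGd : ∀ T ∈ G, T.card = d) (hIG : I = Ideal.span (sqMon K '' ↑G))
    (hG1 : 1 < G.card) (hmu : rho K (d + 1) I ≤ G.card) :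
    moduleDepth (maxGraded K n) ↥I = (d : ℕ∞) := by
  classical
  subst hIG
  apply le_antisymm
  · apply sSup_le
    rintro k ⟨rs, rfl, hrs, hreg⟩
    rw [Nat.cast_le]
    by_contra hlt
    push Not at hlt
    have hKV := KZ.KV_of_regular (X : Fin n → MvPolynomial (Fin n) K) rs _ hrs
      hreg.toIsWeaklyRegular d hlt
    let B : Finset (Finset (Fin n)) :=
      Finset.univ.filter (fun U => U.card = d + 1 ∧ ∃ T ∈ G, T ⊆ U)
    have hB : ∀ U, U ∈ B ↔ U.card = d + 1 ∧ ∃ T ∈ G, T ⊆ U := by simp [B]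
    have hBc : B.card ≤ G.card := by
      refine le_trans (le_of_eq ?_) hmu
      unfold rho
      rw [← Set.ncard_coe_finset]
      congr 1
      ext U
      simp only [SetLike.mem_coe, hB, Set.mem_ofPred_eq, KZ.sqMon_mem]
    obtain ⟨c, h1, h2, h3⟩ := KZ.exists_cocycle (K := K) G B hGd hB hG1 hBc
    exact KZ.not_KV G hGd c h1 h2 h3 hKV
  · apply le_sSup
    obtain ⟨rs, hl, hm, hreg⟩ := KZ.regular_of_KV (X : Fin n → MvPolynomial (Fin n) K) d
      (Ideal.span (sqMon K '' (G : Set (Finset (Fin n)))))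
      (fun p hp => KZ.KV_I G hGd p hp)
    refine ⟨rs, by rw [hl], hm, hreg, ?_⟩
    intro htop
    obtain ⟨T, hT⟩ : G.Nonempty := Finset.card_pos.1 (by omega)
    have hmem : sqMon K T ∈ Ideal.span (sqMon K '' (G : Set (Finset (Fin n)))) :=
      Ideal.subset_span ⟨T, hT, rfl⟩
    have hx : (⟨sqMon K T, hmem⟩ : Ideal.span (sqMon K '' (G : Set (Finset (Fin n))))) ∈
        (Ideal.ofList rs • ⊤ : Submodule (MvPolynomial (Fin n) K)
          (Ideal.span (sqMon K '' (G : Set (Finset (Fin n)))))) := by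
      rw [← htop]; trivial
    have hle : Ideal.ofList rs ≤ maxGraded K n := Ideal.span_le.2 hm
    have h0 : coeff (KZ.ev T) (sqMon K T) = 0 := by
      have := Submodule.smul_induction_on
        (p := fun x : Ideal.span (sqMon K '' (G : Set (Finset (Fin n)))) =>
          coeff (KZ.ev T) (x : MvPolynomial (Fin n) K) = 0) hx ?_ ?_
      · exact this
      · intro r hr f _
        exact KZ.coeff_mI G hGd _ f.2 r (hle hr) T (hGd T hT)
      · intro x y hx hy
        simp [hx, hy]
    rw [KZ.sqMon_eq] at h0
    simp at h0
end

section
/- Let d be a positive integer and I a square-free monomial ideal of S with ρ_d(I) > 0 and I generated in degrees ≥ d. Then the following are equivalent: (1) sdepth_S I = d; (2) there exist square-free monomials of degree d in I which generate an ideal I' such that ρ_d(I') > ρ_{d+1}(I'). -/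
open MvPolynomial

/-- The poset (here: set, ordered by `⊆`, i.e. divisibility of square-free monomials)
of square-free monomials lying in `I \ J`. -/
def monoPoset (K : Type) [Field K] {n : ℕ} (I J : Ideal (MvPolynomial (Fin n) K)) :
    Set (Finset (Fin n)) :=
  {T | sqMon K T ∈ I ∧ sqMon K T ∉ J}

/-- `C` is a partition of `P` into intervals `[p.1, p.2] = {T | p.1 ⊆ T ⊆ p.2}`:
the intervals have endpoints in `P` and every element of `P` lies in exactly one
of them. -/
def IntervalPartition {n : ℕ} (P : Set (Finset (Fin n)))
    (C : Finset (Finset (Fin n) × Finset (Fin n))) : Prop :=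
  (∀ p ∈ C, p.1 ∈ P ∧ p.2 ∈ P ∧ p.1 ⊆ p.2) ∧
  ∀ T ∈ P, ∃! p, p ∈ C ∧ p.1 ⊆ T ∧ T ⊆ p.2

/-- The Stanley depth of `I/J`: the maximum over interval partitions of the poset of
square-free monomials of `I \ J` of the minimal degree of an upper endpoint. -/
noncomputable def sdepthQuot (K : Type) [Field K] {n : ℕ}
    (I J : Ideal (MvPolynomial (Fin n) K)) : ℕ :=
  sSup {d : ℕ | ∃ C, IntervalPartition (monoPoset K I J) C ∧ ∀ p ∈ C, d ≤ p.2.card}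


theorem sqMon_eq_aux (K : Type) [Field K] {n : ℕ} (T : Finset (Fin n)) :
    sqMon K T = monomial (∑ i ∈ T, Finsupp.single i 1) (1 : K) := by
  unfold sqMon
  rw [MvPolynomial.monomial_sum_one]
  rfl

theorem expo_apply_aux {n : ℕ} (T : Finset (Fin n)) (j : Fin n) :
    (∑ i ∈ T, Finsupp.single i 1 : Fin n →₀ ℕ) j = if j ∈ T then 1 else 0 := by
  classical
  simp [Finsupp.finsetSum_apply, Finsupp.single_apply]

theorem expo_le_aux {n : ℕ} (U T : Finset (Fin n)) :
    (∑ i ∈ U, Finsupp.single i 1 : Fin n →₀ ℕ) ≤ ∑ i ∈ T, Finsupp.single i 1 ↔ U ⊆ T := by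
  rw [Finsupp.le_def]
  simp only [expo_apply_aux]
  constructor
  · intro h j hj
    have := h j
    by_contra hT
    simp [hj, hT] at this
  · intro h j
    by_cases hj : j ∈ U
    · simp [hj, h hj]
    · simp [hj]

theorem mem_span_aux (K : Type) [Field K] {n : ℕ} (G : Set (Finset (Fin n)))
    (T : Finset (Fin n)) :
    sqMon K T ∈ Ideal.span (sqMon K '' G) ↔ ∃ U ∈ G, U ⊆ T := by
  classical
  have h : sqMon K '' G = (fun s => monomial s (1 : K)) ''
      ((fun U : Finset (Fin n) => (∑ i ∈ U, Finsupp.single i 1 : Fin n →₀ ℕ)) '' G) := by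
    rw [Set.image_image]
    exact Set.image_congr (fun U _ => sqMon_eq_aux K U)
  rw [h, mem_ideal_span_monomial_image, sqMon_eq_aux, support_monomial]
  simp [expo_le_aux]

theorem sqMon_ne_zero_aux (K : Type) [Field K] {n : ℕ} (T : Finset (Fin n)) :
    sqMon K T ≠ 0 := by
  rw [sqMon_eq_aux]; simp

/-- Hall matching of the degree `d` layer. -/
theorem partition_iff_aux {n d : ℕ} (P : Set (Finset (Fin n)))
    (hup : ∀ U T, U ∈ P → U ⊆ T → T ∈ P) (hge : ∀ T ∈ P, d ≤ T.card) :
    (∃ C, IntervalPartition P C ∧ ∀ p ∈ C, d + 1 ≤ p.2.card) ↔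
    ∃ f : {T : Finset (Fin n) // T.card = d ∧ T ∈ P} → Finset (Fin n),
      Function.Injective f ∧ ∀ T, (f T).card = d + 1 ∧ T.1 ⊆ f T := by
  classical
  constructor
  · rintro ⟨C, ⟨hC1, hC2⟩, hC3⟩
    have key : ∀ T : {T : Finset (Fin n) // T.card = d ∧ T ∈ P},
        ∃ V : Finset (Fin n), V.card = d + 1 ∧ T.1 ⊆ V ∧ ∃ p ∈ C, p.1 = T.1 ∧ V ⊆ p.2 := by
      rintro ⟨T, hTd, hTP⟩
      obtain ⟨p, ⟨hpC, hp1, hp2⟩, -⟩ := hC2 T hTP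
      have h1 : p.1 = T := Finset.eq_of_subset_of_card_le hp1 (by
        rw [hTd]; exact hge _ (hC1 p hpC).1)
      obtain ⟨V, hV1, hV2, hV3⟩ := Finset.exists_subsuperset_card_eq (n := d + 1) hp2
        (by omega) (hC3 p hpC)
      exact ⟨V, hV3, hV1, p, hpC, h1, hV2⟩
    choose f hf1 hf2 p hp1 hp2 hp3 using key
    refine ⟨f, ?_, fun T => ⟨hf1 T, hf2 T⟩⟩
    intro T T' h
    have hu := hC2 (f T) (hup _ _ T.2.2 (hf2 T))
    have := hu.unique (y₁ := p T) (y₂ := p T') ⟨hp1 T, (hp2 T).symm ▸ hf2 T, hp3 T⟩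
      ⟨hp1 T', (hp2 T').symm ▸ h ▸ hf2 T', h ▸ hp3 T'⟩
    apply Subtype.ext
    rw [← hp2 T, ← hp2 T', this]
  · rintro ⟨f, hinj, hf⟩
    let C : Finset (Finset (Fin n) × Finset (Fin n)) := Finset.univ.filter (fun p =>
      (∃ T, p = (T.1, f T)) ∨ (p.1 = p.2 ∧ p.1 ∈ P ∧ d + 1 ≤ p.1.card ∧ ∀ T, f T ≠ p.1))
    have hC : ∀ p, p ∈ C ↔ (∃ T, p = (T.1, f T)) ∨
        (p.1 = p.2 ∧ p.1 ∈ P ∧ d + 1 ≤ p.1.card ∧ ∀ T, f T ≠ p.1) := by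
      intro p; simp [C]
    have hmid : ∀ (T) (V : Finset (Fin n)), T.1 ⊆ V → V ⊆ f T → V = T.1 ∨ V = f T := by
      intro T V h1 h2
      have c1 := Finset.card_le_card h1
      have c2 := Finset.card_le_card h2
      have := T.2.1
      have := (hf T).1
      by_cases hV : V.card = d
      · exact Or.inl (Finset.eq_of_subset_of_card_le h1 (by omega)).symm
      · exact Or.inr (Finset.eq_of_subset_of_card_le h2 (by omega))
    refine ⟨C, ⟨?_, ?_⟩, ?_⟩
    · intro p hp
      rcases (hC p).1 hp with ⟨T, rfl⟩ | ⟨h1, h2, -, -⟩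
      · exact ⟨T.2.2, hup _ _ T.2.2 (hf T).2, (hf T).2⟩
      · exact ⟨h2, h1 ▸ h2, h1 ▸ Finset.Subset.refl _⟩
    · intro V hV
      by_cases hVd : V.card = d
      · refine ⟨(V, f ⟨V, hVd, hV⟩), ⟨(hC _).2 (Or.inl ⟨⟨V, hVd, hV⟩, rfl⟩),
          Finset.Subset.refl _, (hf ⟨V, hVd, hV⟩).2⟩, ?_⟩
        rintro q ⟨hq, hq1, hq2⟩
        rcases (hC q).1 hq with ⟨T, rfl⟩ | ⟨h1, h2, h3, -⟩
        · have : T = ⟨V, hVd, hV⟩ := Subtype.ext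
            (Finset.eq_of_subset_of_card_le hq1 (by rw [hVd, T.2.1]))
          rw [this]
        · have := Finset.card_le_card hq1
          omega
      · have hVd' : d + 1 ≤ V.card := by
          have := hge V hV
          omega
        by_cases hT : ∃ T, f T = V
        · obtain ⟨T, rfl⟩ := hT
          refine ⟨(T.1, f T), ⟨(hC _).2 (Or.inl ⟨T, rfl⟩), (hf T).2, Finset.Subset.refl _⟩, ?_⟩
          rintro q ⟨hq, hq1, hq2⟩
          rcases (hC q).1 hq with ⟨T', rfl⟩ | ⟨h1, h2, h3, h4⟩
          · rcases hmid T' _ hq1 hq2 with h | h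
            · exact absurd (h ▸ T'.2.1) hVd
            · rw [hinj h]
          · exact absurd (Finset.Subset.antisymm (h1 ▸ hq2) hq1) (h4 T)
        · push Not at hT
          refine ⟨(V, V), ⟨(hC _).2 (Or.inr ⟨rfl, hV, hVd', hT⟩), Finset.Subset.refl _,
            Finset.Subset.refl _⟩, ?_⟩
          rintro q ⟨hq, hq1, hq2⟩
          rcases (hC q).1 hq with ⟨T', rfl⟩ | ⟨h1, h2, h3, h4⟩
          · rcases hmid T' _ hq1 hq2 with h | h
            · exact absurd (h ▸ T'.2.1) hVd
            · exact absurd h.symm (hT T')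
          · have e : q.1 = V := Finset.Subset.antisymm hq1 (h1 ▸ hq2)
            exact Prod.ext e (h1 ▸ e)
    · intro p hp
      rcases (hC p).1 hp with ⟨T, rfl⟩ | ⟨h1, -, h3, -⟩
      · exact (hf T).1.ge
      · exact h1 ▸ h3

theorem hall_aux {n d : ℕ} (K : Type) [Field K] (P : Set (Finset (Fin n))) :
    (∃ f : {T : Finset (Fin n) // T.card = d ∧ T ∈ P} → Finset (Fin n),
      Function.Injective f ∧ ∀ T, (f T).card = d + 1 ∧ T.1 ⊆ f T) ↔
    ∀ G : Set (Finset (Fin n)), (∀ T ∈ G, T.card = d ∧ T ∈ P) →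
      rho K d (Ideal.span (sqMon K '' G)) ≤ rho K (d + 1) (Ideal.span (sqMon K '' G)) := by
  classical
  have hall := Finset.all_card_le_biUnion_card_iff_exists_injective
    (fun T : {T : Finset (Fin n) // T.card = d ∧ T ∈ P} =>
      Finset.univ.filter (fun V : Finset (Fin n) => V.card = d + 1 ∧ T.1 ⊆ V))
  simp only [Finset.mem_filter, Finset.mem_univ, true_and] at hall
  rw [← hall]
  -- counts attached to a finset of the subtype
  have hcount : ∀ s : Finset {T : Finset (Fin n) // T.card = d ∧ T ∈ P},
      rho K d (Ideal.span (sqMon K '' (Subtype.val '' (s : Set {T : Finset (Fin n) // T.card = d ∧ T ∈ P})))) = s.card ∧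
      rho K (d + 1) (Ideal.span (sqMon K '' (Subtype.val '' (s : Set {T : Finset (Fin n) // T.card = d ∧ T ∈ P})))) =
        (s.biUnion (fun T => Finset.univ.filter
          (fun V : Finset (Fin n) => V.card = d + 1 ∧ T.1 ⊆ V))).card := by
    intro s
    unfold rho
    simp only [mem_span_aux]
    constructor
    · rw [← Finset.card_map (Function.Embedding.subtype _), ← Set.ncard_coe_finset]
      congr 1
      ext V
      simp only [Set.mem_ofPred_eq, Finset.coe_map, Function.Embedding.subtype_apply]
      constructor
      · rintro ⟨hV, _, ⟨T, hT, rfl⟩, hTV⟩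
        exact ⟨T, hT, Finset.eq_of_subset_of_card_le hTV (hV.trans T.2.1.symm).le⟩
      · rintro ⟨T, hT, rfl⟩
        exact ⟨T.2.1, _, ⟨T, hT, rfl⟩, Finset.Subset.refl _⟩
    · rw [← Set.ncard_coe_finset]
      congr 1
      ext V
      simp only [Set.mem_ofPred_eq, Finset.mem_coe, Finset.mem_biUnion, Finset.mem_filter,
        Finset.mem_univ, true_and]
      constructor
      · rintro ⟨hV, _, ⟨T, hT, rfl⟩, hTV⟩
        exact ⟨T, hT, hV, hTV⟩
      · rintro ⟨T, hT, hV, hTV⟩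
        exact ⟨hV, _, ⟨T, hT, rfl⟩, hTV⟩
  constructor
  · intro h G hG
    have hs : G = Subtype.val '' ((Finset.univ.filter
        (fun T : {T : Finset (Fin n) // T.card = d ∧ T ∈ P} => T.1 ∈ G) : Finset _) :
          Set {T : Finset (Fin n) // T.card = d ∧ T ∈ P}) := by
      ext V
      constructor
      · intro hV
        exact ⟨⟨V, hG V hV⟩, by simpa using hV, rfl⟩
      · rintro ⟨T, hT, rfl⟩
        simpa using hT
    rw [hs, (hcount _).1, (hcount _).2]
    exact h _
  · intro h s
    have := h (Subtype.val '' (s : Set {T : Finset (Fin n) // T.card = d ∧ T ∈ P})) (by rintro _ ⟨T, -, rfl⟩; exact T.2)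
    rwa [(hcount s).1, (hcount s).2] at this

/-- Corollary 4.2, the case `J = 0` of Theorem 4.1. -/
theorem stmt_17 (n : ℕ) (K : Type) [Field K] (d : ℕ) (hd : 0 < d)
    (I : Ideal (MvPolynomial (Fin n) K))
    (hI : GenBySqMonOfDeg K (fun k => d ≤ k) I)
    (hrho : 0 < rho K d I) :
    sdepthQuot K I ⊥ = d ↔
      ∃ G : Set (Finset (Fin n)),
        (∀ T ∈ G, T.card = d ∧ sqMon K T ∈ I) ∧
        rho K (d + 1) (Ideal.span (sqMon K '' G)) <
          rho K d (Ideal.span (sqMon K '' G)) := by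
  classical
  obtain ⟨G₀, hG₀, rfl⟩ := hI
  set I := Ideal.span (sqMon K '' G₀) with hIdef
  have hP : monoPoset K I ⊥ = {T | sqMon K T ∈ I} := by
    ext T
    simp [monoPoset, sqMon_ne_zero_aux]
  have hup : ∀ U T, U ∈ {T | sqMon K T ∈ I} → U ⊆ T → T ∈ {T | sqMon K T ∈ I} := by
    intro U T hU hUT
    simp only [Set.mem_ofPred_eq, hIdef, mem_span_aux] at hU ⊢
    obtain ⟨W, hW, hWU⟩ := hU
    exact ⟨W, hW, hWU.trans hUT⟩
  have hge : ∀ T ∈ {T | sqMon K T ∈ I}, d ≤ T.card := by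
    intro T hT
    simp only [Set.mem_ofPred_eq, hIdef, mem_span_aux] at hT
    obtain ⟨W, hW, hWT⟩ := hT
    exact (hG₀ W hW).trans (Finset.card_le_card hWT)
  have main := (partition_iff_aux _ hup hge).trans (hall_aux (d := d) K {T | sqMon K T ∈ I})
  have hne : ∃ T, sqMon K T ∈ I := by
    obtain ⟨T, hT⟩ := Set.nonempty_of_ncard_ne_zero (Nat.pos_iff_ne_zero.1 hrho)
    exact ⟨T, hT.2⟩
  unfold sdepthQuot
  rw [hP]
  set S := {e : ℕ | ∃ C, IntervalPartition {T | sqMon K T ∈ I} C ∧ ∀ p ∈ C, e ≤ p.2.card} with hS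
  have hdS : d ∈ S := by
    refine ⟨Finset.univ.filter (fun p => p.1 = p.2 ∧ sqMon K p.1 ∈ I), ⟨?_, ?_⟩, ?_⟩
    · intro p hp
      simp only [Finset.mem_filter, Finset.mem_univ, true_and] at hp
      exact ⟨hp.2, hp.1 ▸ hp.2, hp.1 ▸ Finset.Subset.refl _⟩
    · intro T hT
      refine ⟨(T, T), ⟨by simpa using hT, Finset.Subset.refl _, Finset.Subset.refl _⟩, ?_⟩
      rintro q ⟨hq, hq1, hq2⟩
      simp only [Finset.mem_filter, Finset.mem_univ, true_and] at hq
      have e : q.1 = T := Finset.Subset.antisymm hq1 (hq.1 ▸ hq2)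
      exact Prod.ext e (hq.1 ▸ e)
    · intro p hp
      simp only [Finset.mem_filter, Finset.mem_univ, true_and] at hp
      exact hp.1 ▸ hge _ hp.2
  have hbdd : BddAbove S := by
    refine ⟨n, ?_⟩
    rintro e ⟨C, ⟨-, hC⟩, he⟩
    obtain ⟨T, hT⟩ := hne
    obtain ⟨p, ⟨hp, -⟩, -⟩ := hC T hT
    exact (he p hp).trans ((Finset.card_le_univ _).trans (by simp))
  have hdown : ∀ e ∈ S, ∀ e' ≤ e, e' ∈ S := by
    rintro e ⟨C, hC, he⟩ e' hle
    exact ⟨C, hC, fun p hp => hle.trans (he p hp)⟩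
  have h1 : sSup S = d ↔ ¬ (d + 1 ∈ S) := by
    constructor
    · intro h hmem
      have := le_csSup hbdd hmem
      omega
    · intro h
      have a := le_csSup hbdd hdS
      have b := Nat.sSup_mem ⟨d, hdS⟩ hbdd
      by_contra hc
      exact h (hdown _ b _ (by omega))
  rw [h1]
  refine (not_congr main).trans ?_
  push Not
  rfl
end

section
/- Let d be a positive integer and J ⊊ I square-free monomial ideals of S with ρ_d(I) > 0 and I generated in degrees ≥ d. If sdepth_S (I/J) = d, then depth_S (I/J) = d; that is, Stanley's conjecture holds in this case. -/
open MvPolynomial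

namespace Kz
open Finset
section
variable {R : Type} [CommRing R] {n : ℕ} (x : Fin n → R)

def sg (R : Type) [CommRing R] {n : ℕ} (j : Fin n) (T : Finset (Fin n)) : R :=
  (-1) ^ (#(T.filter (· < j)))

lemma sg_sq (j : Fin n) (T : Finset (Fin n)) : sg R j T * sg R j T = 1 := by
  unfold sg
  rw [← pow_add, ← two_mul, pow_mul]; simp

lemma sg_insert_self (j : Fin n) (T : Finset (Fin n)) : sg R j (insert j T) = sg R j T := by
  unfold sg
  rw [filter_insert]; simp

lemma sg_erase_self (j : Fin n) (T : Finset (Fin n)) : sg R j (T.erase j) = sg R j T := by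
  unfold sg
  congr 2; ext a; simp only [mem_filter, mem_erase]
  exact ⟨fun h => ⟨h.1.2, h.2⟩, fun h => ⟨⟨h.2.ne, h.1⟩, h.2⟩⟩

lemma sg_insert_of_lt {i j : Fin n} (h : i < j) (T : Finset (Fin n)) :
    sg R i (insert j T) = sg R i T := by
  unfold sg
  rw [filter_insert, if_neg (not_lt.2 h.le)]

lemma sg_insert_of_gt {i j : Fin n} (h : j < i) {T : Finset (Fin n)} (hT : j ∉ T) :
    sg R i (insert j T) = - sg R i T := by
  unfold sg
  rw [filter_insert, if_pos h, card_insert_of_notMem (by simp [hT]), pow_succ]; ring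

lemma sg_erase_of_lt {i j : Fin n} (h : i < j) (T : Finset (Fin n)) :
    sg R i (T.erase j) = sg R i T := by
  by_cases hj : j ∈ T
  · conv_rhs => rw [← insert_erase hj, sg_insert_of_lt h]
  · rw [erase_eq_of_notMem hj]

lemma sg_erase_of_gt {i j : Fin n} (h : j < i) {T : Finset (Fin n)} (hj : j ∈ T) :
    sg R i (T.erase j) = - sg R i T := by
  conv_rhs => rw [← insert_erase hj, sg_insert_of_gt h (notMem_erase j T), neg_neg]

lemma sg_comm {i j : Fin n} {T : Finset (Fin n)} (hi : i ∈ T) (hj : j ∈ T) (hij : i ≠ j) :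
    sg R j T * sg R i (T.erase j) = - (sg R i T * sg R j (T.erase i)) := by
  rcases lt_or_gt_of_ne hij with h | h
  · rw [sg_erase_of_lt h, sg_erase_of_gt h hi]; ring
  · rw [sg_erase_of_lt h, sg_erase_of_gt h hj]; ring

lemma sg_comm2 {i j : Fin n} {T : Finset (Fin n)} (hi : i ∈ T) (hj : j ∉ T) :
    sg R i T * sg R j (T.erase i) = - (sg R j T * sg R i (insert j T)) := by
  have hij : i ≠ j := fun h => hj (h ▸ hi)
  rcases lt_or_gt_of_ne hij with h | h
  · rw [sg_insert_of_lt h, sg_erase_of_gt h hi]; ring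
  · rw [sg_insert_of_gt h hj, sg_erase_of_lt h]; ring

variable {M : Type} [AddCommGroup M] [Module R M]
  {N : Type} [AddCommGroup N] [Module R N] {L : Type} [AddCommGroup L] [Module R L]

/-- Koszul differential. -/
def kd : (Finset (Fin n) → M) →ₗ[R] (Finset (Fin n) → M) where
  toFun f T := ∑ j ∈ T, (sg R j T * x j) • f (T.erase j)
  map_add' f g := by ext T; simp [smul_add, sum_add_distrib]
  map_smul' r f := by
    ext T; simp only [Pi.smul_apply, RingHom.id_apply, smul_sum]
    exact sum_congr rfl fun j _ => smul_comm _ _ _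

lemma kd_apply (f : Finset (Fin n) → M) (T) :
    kd x f T = ∑ j ∈ T, (sg R j T * x j) • f (T.erase j) := rfl

lemma kd_kd (f : Finset (Fin n) → M) : kd x (kd x f) = 0 := by
  ext T
  simp only [kd_apply, smul_sum, smul_smul, Pi.zero_apply]
  rw [sum_sigma']
  refine sum_involution (fun p _ => ⟨p.2, p.1⟩) ?_ ?_ ?_ ?_
  · rintro ⟨j, i⟩ h
    simp only [mem_sigma, mem_erase] at h
    rw [erase_right_comm, ← add_smul]
    have := sg_comm (R := R) h.2.2 h.1 h.2.1
    rw [show sg R j T * x j * (sg R i (T.erase j) * x i) + sg R i T * x i * (sg R j (T.erase i) * x j)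
      = (sg R j T * sg R i (T.erase j) + sg R i T * sg R j (T.erase i)) * (x i * x j) by ring, this]
    simp
  · rintro ⟨j, i⟩ h _ h2
    simp only [mem_sigma, mem_erase] at h
    simp only [Sigma.mk.injEq, heq_eq_eq] at h2
    exact h.2.1 h2.1
  · rintro ⟨j, i⟩ h
    simp only [mem_sigma, mem_erase] at h ⊢
    exact ⟨h.2.2, h.2.1.symm, h.1⟩
  · rintro ⟨j, i⟩ h; rfl

def hom (R : Type) [CommRing R] [Module R M] (j : Fin n) (f : Finset (Fin n) → M) :
    Finset (Fin n) → M :=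
  fun T => if j ∈ T then 0 else sg R j T • f (insert j T)

lemma kd_hom (j : Fin n) (f : Finset (Fin n) → M) :
    kd x (hom R j f) + hom R j (kd x f) = x j • f := by
  ext T
  by_cases hj : j ∈ T
  · simp only [Pi.add_apply, hom, kd_apply, hj, if_true, add_zero, Pi.smul_apply]
    rw [sum_eq_single_of_mem j hj]
    · simp only [notMem_erase, if_false, insert_erase hj, smul_smul, sg_erase_self]
      rw [mul_right_comm, sg_sq, one_mul]
    · intro i hi hij
      rw [if_pos (by simp [hj, hij.symm]), smul_zero]
  · simp only [Pi.add_apply, hom, kd_apply, hj, if_false, Pi.smul_apply]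
    rw [sum_insert hj, erase_insert hj, smul_add, ← add_assoc, add_right_comm, smul_sum,
      ← sum_add_distrib, smul_smul, sg_insert_self, ← mul_assoc, sg_sq, one_mul, sum_eq_zero,
      zero_add]
    intro i hi
    have hij : i ≠ j := fun h => hj (h ▸ hi)
    rw [if_neg (by simp [hj]), erase_insert_of_ne hij.symm, smul_smul, smul_smul, ← add_smul]
    have := sg_comm2 (R := R) hi hj
    rw [show sg R i T * x i * sg R j (T.erase i) + sg R j T * (sg R i (insert j T) * x i)
      = (sg R i T * sg R j (T.erase i) + sg R j T * sg R i (insert j T)) * x i by ring, this]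
    simp

def Van (M : Type) [AddCommGroup M] [Module R M] (k : ℕ) : Prop :=
  ∀ i < k, ∀ f : Finset (Fin n) → M, (∀ T, #T ≠ i → f T = 0) → kd x f = 0 →
    ∃ g : Finset (Fin n) → M, (∀ T, #T + 1 ≠ i → g T = 0) ∧ kd x g = f

lemma homog_kd {f : Finset (Fin n) → M} {i : ℕ} (hf : ∀ T, #T + 1 ≠ i → f T = 0) :
    ∀ T, #T ≠ i → kd x f T = 0 := by
  intro T hT
  rw [kd_apply]
  refine sum_eq_zero fun j hj => ?_
  rw [hf, smul_zero]
  rw [card_erase_add_one hj]; exact hT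

lemma kd_map (φ : M →ₗ[R] N) (f : Finset (Fin n) → M) :
    kd x (fun T => φ (f T)) = fun T => φ (kd x f T) := by
  ext T; simp [kd_apply]

lemma homot {r : R} (hr : r ∈ Ideal.span (Set.range x)) {f : Finset (Fin n) → M} {i : ℕ}
    (hf : ∀ T, #T ≠ i → f T = 0) (hz : kd x f = 0) :
    ∃ g : Finset (Fin n) → M, (∀ T, #T + 1 ≠ i → g T = 0) ∧ kd x g = r • f := by
  induction hr using Submodule.span_induction with
  | mem r h =>
    obtain ⟨j, rfl⟩ := h
    refine ⟨hom R j f, ?_, ?_⟩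
    · intro T hT
      unfold hom
      split_ifs with h
      · rfl
      · rw [hf, smul_zero]; rwa [card_insert_of_notMem h]
    · have := kd_hom x j f
      rw [hz] at this
      rw [← this]
      ext T; simp [hom]
  | zero => exact ⟨0, by simp, by simp⟩
  | add r s _ _ h1 h2 =>
    obtain ⟨g1, h1, e1⟩ := h1
    obtain ⟨g2, h2, e2⟩ := h2
    exact ⟨g1 + g2, fun T hT => by simp [h1 T hT, h2 T hT], by rw [map_add, e1, e2, add_smul]⟩
  | smul a r _ h1 =>
    obtain ⟨g1, h1, e1⟩ := h1
    exact ⟨a • g1, fun T hT => by simp [h1 T hT], by rw [map_smul, e1, smul_assoc]⟩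

/-- choose homogeneous lifts -/
lemma lift_homog (π : M →ₗ[R] N) (hπ : Function.Surjective π) {P : Finset (Fin n) → Prop}
    (f : Finset (Fin n) → N) (hf : ∀ T, P T → f T = 0) :
    ∃ g : Finset (Fin n) → M, (∀ T, P T → g T = 0) ∧ (fun T => π (g T)) = f := by
  have : ∀ T, ∃ m : M, (P T → m = 0) ∧ π m = f T := by
    intro T
    by_cases h : P T
    · exact ⟨0, fun _ => rfl, by rw [map_zero, hf T h]⟩
    · obtain ⟨m, hm⟩ := hπ (f T)
      exact ⟨m, fun h' => absurd h' h, hm⟩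
  choose g h1 h2 using this
  exact ⟨g, h1, funext h2⟩

lemma pi_reg {r : R} (hr : IsSMulRegular M r) {f g : Finset (Fin n) → M} (h : r • f = r • g) :
    f = g := by
  ext T; exact hr (congrFun h T)

lemma van_up {r : R} (hr : r ∈ Ideal.span (Set.range x)) (hreg : IsSMulRegular M r)
    (π : M →ₗ[R] N) (hπ : Function.Surjective π) (hker : ∀ m, π m = 0 → ∃ m', m = r • m')
    (hrN : ∀ m : M, π (r • m) = 0)
    {k : ℕ} (hN : Van x N k) : Van x M (k + 1) := by
  intro i hi f hf hz
  obtain ⟨b, hb, hbe⟩ := homot x hr hf hz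
  rcases i with _ | i
  · refine ⟨b, hb, ?_⟩
    have hb0 : b = 0 := by ext T; exact hb T (by omega)
    rw [hb0, map_zero] at hbe ⊢
    refine pi_reg hreg ?_
    rw [← hbe, smul_zero]
  · obtain ⟨a', ha', hae'⟩ := hN i (by omega) (fun T => π (b T))
      (fun T hT => by rw [hb T (by omega), map_zero])
      (by rw [kd_map, hbe]; ext T; simpa using hrN (f T))
    obtain ⟨a, ha, rfl⟩ := lift_homog π hπ (P := fun T => #T + 1 ≠ i) a' ha'
    rw [kd_map] at hae'
    have : ∀ T, ∃ m', (#T + 1 ≠ i + 1 → m' = 0) ∧ b T - kd x a T = r • m' := by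
      intro T
      by_cases h : #T + 1 ≠ i + 1
      · refine ⟨0, fun _ => rfl, ?_⟩
        rw [hb T h, homog_kd x ha T (by omega)]; simp
      · obtain ⟨m, hm⟩ := hker (b T - kd x a T) (by
          rw [map_sub, sub_eq_zero]; exact (congrFun hae' T).symm)
        exact ⟨m, fun h' => absurd h' h, hm⟩
    choose b' h1 h2 using this
    refine ⟨b', h1, pi_reg hreg ?_⟩
    have h2 : b - kd x a = r • b' := funext h2
    rw [← map_smul, ← h2, map_sub, kd_kd, sub_zero, hbe]

lemma van_down {r : R} (hreg : IsSMulRegular M r)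
    (π : M →ₗ[R] N) (hπ : Function.Surjective π) (hker : ∀ m, π m = 0 → ∃ m', m = r • m')
    (hrN : ∀ m : M, π (r • m) = 0)
    {k : ℕ} (hM : Van x M (k + 1)) : Van x N k := by
  intro i hi f' hf' hz'
  obtain ⟨f, hf, rfl⟩ := lift_homog π hπ (P := fun T => #T ≠ i) f' hf'
  rw [kd_map] at hz'
  have : ∀ T, ∃ m', kd x f T = r • m' := fun T => hker _ (congrFun hz' T)
  choose c h2 using this
  have h2 : kd x f = r • c := funext h2
  obtain ⟨a, ha, hae⟩ := hM (i + 1) (by omega) c (fun T hT => by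
      refine hreg ?_
      change r • c T = r • 0
      have := congrFun h2 T
      rw [Pi.smul_apply] at this
      rw [← this, smul_zero, homog_kd x (i := i + 1) (fun T hT => hf T (by omega)) T hT])
    (pi_reg hreg (by rw [← map_smul, ← h2, kd_kd, smul_zero]))
  obtain ⟨g, hg, hge⟩ := hM i (by omega) (f - r • a)
    (fun T hT => by simp [hf T hT, ha T (by omega)])
    (by rw [map_sub, map_smul, hae, h2, sub_self])
  refine ⟨fun T => π (g T), fun T hT => by simp [hg T hT], ?_⟩
  rw [kd_map, hge]
  ext T
  rw [Pi.sub_apply, map_sub, Pi.smul_apply, hrN, sub_zero]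

lemma van_ext (ι : L →ₗ[R] M) (hι : Function.Injective ι) (π : M →ₗ[R] N)
    (hπ : Function.Surjective π) (hker : ∀ m, π m = 0 → ∃ l, ι l = m) {k : ℕ}
    (hL : Van x L k) (hN : Van x N k) : Van x M k := by
  intro i hi f hf hz
  obtain ⟨g', hg', hge'⟩ := hN i hi (fun T => π (f T)) (fun T hT => by rw [hf T hT, map_zero])
    (by rw [kd_map, hz]; ext T; simp)
  obtain ⟨g, hg, rfl⟩ := lift_homog π hπ (P := fun T => #T + 1 ≠ i) g' hg'
  rw [kd_map] at hge'
  have : ∀ T, ∃ l, ι l = f T - kd x g T := fun T => hker _ (by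
    rw [map_sub, sub_eq_zero]; exact (congrFun hge' T).symm)
  choose l hl using this
  have hl' : (fun T => ι (l T)) = f - kd x g := funext hl
  obtain ⟨a, ha, hae⟩ := hL i hi l (fun T hT => hι (by
      rw [hl, hf T hT, homog_kd x hg T hT]; simp))
    (by
      ext T
      refine hι ?_
      have := congrFun (kd_map x ι l) T
      rw [← this, hl', map_sub, hz, kd_kd]; simp)
  refine ⟨g + fun T => ι (a T), fun T hT => by simp [hg T hT, ha T hT], ?_⟩
  rw [map_add, kd_map, hae, hl']; abel

lemma van_zero : Van x M 0 := fun i hi => by omega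

lemma van_of_subsingleton [Subsingleton M] (k : ℕ) : Van x M k := fun _ _ f _ _ =>
  ⟨0, by simp, by ext T; exact Subsingleton.elim _ _⟩

end
end Kz

namespace Kz
open Finset RingTheory.Sequence
open scoped Pointwise
section
variable {R : Type} [CommRing R] {n : ℕ} (x : Fin n → R)

lemma mkQ_smul_zero {M : Type} [AddCommGroup M] [Module R M] (r : R) (m : M) :
    (Submodule.mkQ (r • (⊤ : Submodule R M))) (r • m) = 0 := by
  rw [Submodule.mkQ_apply, Submodule.Quotient.mk_eq_zero]
  exact Submodule.smul_mem_pointwise_smul _ _ _ trivial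

lemma mkQ_ker {M : Type} [AddCommGroup M] [Module R M] (r : R) (m : M)
    (h : (Submodule.mkQ (r • (⊤ : Submodule R M))) m = 0) : ∃ m', m = r • m' := by
  rw [Submodule.mkQ_apply, Submodule.Quotient.mk_eq_zero,
    Submodule.mem_smul_pointwise_iff_exists] at h
  obtain ⟨m', -, h⟩ := h
  exact ⟨m', h.symm⟩

lemma van_of_reg (rs : List R) : ∀ (M : Type) [AddCommGroup M] [Module R M],
    (∀ r ∈ rs, r ∈ Ideal.span (Set.range x)) → IsWeaklyRegular M rs → Van x M rs.length := by
  induction rs with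
  | nil => intro M _ _ _ _; exact van_zero x
  | cons r rs ih =>
    intro M _ _ h1 h2
    rw [isWeaklyRegular_cons_iff] at h2
    exact van_up x (h1 r (by simp)) h2.1 (Submodule.mkQ (r • (⊤ : Submodule R M)))
      (Submodule.mkQ_surjective _) (mkQ_ker r) (mkQ_smul_zero r)
      (ih (QuotSMulTop r M) (fun s hs => h1 s (by simp [hs])) h2.2)

lemma exists_reg_elt [IsNoetherianRing R] (M : Type) [AddCommGroup M] [Module R M]
    [Module.Finite R M] {k : ℕ} (h : Van x M (k + 1)) :
    ∃ r ∈ Ideal.span (Set.range x), IsSMulRegular M r := by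
  have := (IsSMulRegular.subsingleton_linearMap_iff (R := R) (M := M)
    (N := R ⧸ Ideal.span (Set.range x))).1 ?_
  · rwa [Ideal.annihilator_quotient] at this
  · refine subsingleton_of_forall_eq 0 fun φ => ?_
    have hx : ∀ j, x j • φ 1 = 0 := by
      intro j
      rw [← map_smul]
      have : x j • (1 : R ⧸ Ideal.span (Set.range x)) = 0 := by
        rw [← map_one (Ideal.Quotient.mk _), ← Ideal.Quotient.mk_eq_mk, ← Submodule.Quotient.mk_smul,
          Submodule.Quotient.mk_eq_zero]
        rw [smul_eq_mul, mul_one]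
        exact Ideal.subset_span ⟨j, rfl⟩
      rw [this, map_zero]
    have h1 : φ 1 = 0 := by
      obtain ⟨g, hg, hge⟩ := h 0 (by omega) (fun T => if T = ∅ then φ 1 else 0)
        (fun T hT => if_neg (by simpa using hT)) (by
          ext T
          rw [kd_apply]
          refine sum_eq_zero fun j hj => ?_
          split_ifs with h
          · rw [mul_smul, hx, smul_zero]
          · rw [smul_zero])
      have hg0 : g = 0 := by ext T; exact hg T (by omega)
      have := congrFun hge ∅
      rw [hg0] at this
      simpa using this.symm
    ext
    simpa using h1

lemma exists_reg [IsNoetherianRing R] (k : ℕ) : ∀ (M : Type) [AddCommGroup M] [Module R M]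
    [Module.Finite R M], Van x M k →
    ∃ rs : List R, rs.length = k ∧ (∀ r ∈ rs, r ∈ Ideal.span (Set.range x)) ∧
      IsWeaklyRegular M rs := by
  induction k with
  | zero => intro M _ _ _ _; exact ⟨[], rfl, by simp, IsWeaklyRegular.nil R M⟩
  | succ k ih =>
    intro M _ _ _ h
    obtain ⟨r, hr, hreg⟩ := exists_reg_elt x M h
    obtain ⟨rs, h1, h2, h3⟩ := ih (QuotSMulTop r M)
      (van_down x hreg (Submodule.mkQ (r • (⊤ : Submodule R M)))
      (Submodule.mkQ_surjective _) (mkQ_ker r) (mkQ_smul_zero r) h)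
    exact ⟨r :: rs, by simp [h1], by simpa using ⟨hr, h2⟩, IsWeaklyRegular.cons hreg h3⟩

end

section
variable {K : Type} [Field K] {n : ℕ}

noncomputable def ind (T : Finset (Fin n)) : Fin n →₀ ℕ := ∑ i ∈ T, Finsupp.single i 1

lemma ind_apply (T : Finset (Fin n)) (i : Fin n) : ind T i = if i ∈ T then 1 else 0 := by
  simp [ind, Finsupp.finsetSum_apply, Finsupp.single_apply]

lemma ind_support (T : Finset (Fin n)) : (ind T).support = T := by
  ext i; simp [ind_apply]

lemma ind_le {T : Finset (Fin n)} {a : Fin n →₀ ℕ} : ind T ≤ a ↔ T ⊆ a.support := by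
  constructor
  · intro h i hi
    have := h i
    rw [ind_apply, if_pos hi] at this
    simp; omega
  · intro h i
    rw [ind_apply]
    split_ifs with hi
    · have := h hi
      simp at this; omega
    · simp

lemma sqMon_eq (T : Finset (Fin n)) : sqMon K T = monomial (ind T) (1 : K) := by
  unfold sqMon ind
  rw [monomial_sum_one]; rfl

variable {I J : Ideal (MvPolynomial (Fin n) K)}

/-- generated by square-free monomials -/
abbrev SF (J : Ideal (MvPolynomial (Fin n) K)) : Prop := GenBySqMonOfDeg K (fun _ => True) J

lemma mem_span_sq {G : Set (Finset (Fin n))} {p : MvPolynomial (Fin n) K} :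
    p ∈ Ideal.span (sqMon K '' G) ↔ ∀ a ∈ p.support, ∃ T ∈ G, T ⊆ a.support := by
  have : sqMon K '' G = (fun s => monomial s (1 : K)) '' (ind '' G) := by
    rw [Set.image_image]; simp only [sqMon_eq]
  rw [this, mem_ideal_span_monomial_image]
  simp [ind_le]

lemma sq_mem_span {G : Set (Finset (Fin n))} {U : Finset (Fin n)} :
    sqMon K U ∈ Ideal.span (sqMon K '' G) ↔ ∃ T ∈ G, T ⊆ U := by
  classical
  rw [mem_span_sq, sqMon_eq, support_monomial, if_neg one_ne_zero]
  simp [ind_support]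

lemma SF.mem_iff (h : SF J) {p : MvPolynomial (Fin n) K} :
    p ∈ J ↔ ∀ a ∈ p.support, sqMon K a.support ∈ J := by
  obtain ⟨G, -, rfl⟩ := h
  simp only [sq_mem_span]
  exact mem_span_sq

lemma sq_mono {T U : Finset (Fin n)} (h : sqMon K T ∈ J) (hTU : T ⊆ U) : sqMon K U ∈ J :=
  J.mem_of_dvd (prod_dvd_prod_of_subset _ _ _ hTU) h

lemma SF.sup (h : SF J) (T : Finset (Fin n)) : SF (J ⊔ Ideal.span {sqMon K T}) := by
  obtain ⟨G, -, rfl⟩ := h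
  refine ⟨G ∪ {T}, by simp, ?_⟩
  rw [Set.image_union, Ideal.span_union, Set.image_singleton]

lemma van_vars (s : Finset (Fin n)) :
    Van (X : Fin n → MvPolynomial (Fin n) K)
      (MvPolynomial (Fin n) K ⧸ Ideal.span (X '' ((s : Set (Fin n))ᶜ) : Set (MvPolynomial (Fin n) K)))
      #s := by
  induction s using Finset.induction_on with
  | empty => exact van_zero _
  | insert j s hj ih =>
    rw [card_insert_of_notMem hj]
    have hset : (X '' ((s : Set (Fin n))ᶜ) : Set (MvPolynomial (Fin n) K)) =
        insert (X j) (X '' (((insert j s : Finset (Fin n)) : Set (Fin n))ᶜ)) := by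
      rw [← Set.image_insert_eq]
      congr 1
      ext i
      by_cases h : i = j
      · subst h; simp [hj]
      · simp [h]
    have hle : Ideal.span (X '' (((insert j s : Finset (Fin n)) : Set (Fin n))ᶜ) : Set (MvPolynomial (Fin n) K))
      ≤ Ideal.span (X '' ((s : Set (Fin n))ᶜ) : Set (MvPolynomial (Fin n) K)) := by
      rw [hset]; exact Ideal.span_mono (Set.subset_insert _ _)
    refine van_up X (r := X j) (Ideal.subset_span ⟨j, rfl⟩) ?_
      (Submodule.mapQ _ _ LinearMap.id hle) ?_ ?_ ?_ ih
    · rw [isSMulRegular_iff_right_eq_zero_of_smul]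
      intro p
      induction p using Submodule.Quotient.induction_on with | _ p
      rw [← Submodule.Quotient.mk_smul, Submodule.Quotient.mk_eq_zero,
        Submodule.Quotient.mk_eq_zero, mem_ideal_span_X_image, mem_ideal_span_X_image]
      intro h a ha
      obtain ⟨i, hi, h2⟩ := h (Finsupp.single j 1 + a) (by
        rw [mem_support_iff, smul_eq_mul, coeff_X_mul]; exact mem_support_iff.1 ha)
      refine ⟨i, hi, ?_⟩
      have hij : i ≠ j := by rintro rfl; simp at hi
      simpa [Finsupp.single_apply, hij.symm] using h2
    · intro p
      induction p using Submodule.Quotient.induction_on with | _ p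
      exact ⟨Submodule.Quotient.mk p, by simp⟩
    · intro p
      induction p using Submodule.Quotient.induction_on with | _ p
      rw [Submodule.mapQ_apply, LinearMap.id_apply, Submodule.Quotient.mk_eq_zero, hset,
        Ideal.mem_span_insert]
      rintro ⟨a, z, hz, rfl⟩
      refine ⟨Submodule.Quotient.mk a, ?_⟩
      rw [← Submodule.Quotient.mk_smul, Submodule.Quotient.eq, smul_eq_mul, mul_comm]
      simpa using hz
    · intro p
      induction p using Submodule.Quotient.induction_on with | _ p
      rw [← Submodule.Quotient.mk_smul, Submodule.mapQ_apply, LinearMap.id_apply,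
        Submodule.Quotient.mk_eq_zero, smul_eq_mul]
      exact Ideal.mul_mem_right _ _ (Ideal.subset_span ⟨j, hj, rfl⟩)

lemma van_idealQuot (d : ℕ) (hI : SF I) : ∀ (m : ℕ) (J : Ideal (MvPolynomial (Fin n) K)), SF J →
    (∀ T ∈ monoPoset K I J, d ≤ #T) → (monoPoset K I J).ncard ≤ m →
    Van (X : Fin n → MvPolynomial (Fin n) K) (idealQuot I J) d := by
  intro m
  induction m with
  | zero =>
    intro J hJ _ h0
    have h0 : monoPoset K I J = ∅ := by
      rwa [Nat.le_zero, Set.ncard_eq_zero] at h0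
    have : I ≤ J := by
      intro p hp
      rw [hJ.mem_iff]
      intro a ha
      by_contra hc
      have : a.support ∈ monoPoset K I J := ⟨hI.mem_iff.1 hp a ha, hc⟩
      rw [h0] at this
      exact this
    have : Subsingleton (idealQuot I J) := by
      rw [Submodule.Quotient.subsingleton_iff, eq_top_iff]
      rintro ⟨p, hp⟩ -
      exact this hp
    exact van_of_subsingleton _ _
  | succ m ih =>
    intro J hJ hd hm
    by_cases hne : (monoPoset K I J) = ∅
    · exact ih J hJ hd (by simp [hne])
    obtain ⟨T, hT, hmax⟩ := Set.exists_max_image (monoPoset K I J) card (Set.toFinite _)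
      (Set.nonempty_iff_ne_empty.2 hne)
    set J' := J ⊔ Ideal.span {sqMon K T} with hJ'
    have hJJ' : J ≤ J' := le_sup_left
    have hTJ' : sqMon K T ∈ J' := (le_sup_right : _ ≤ J') (Ideal.mem_span_singleton_self _)
    have hsub : monoPoset K I J' ⊆ monoPoset K I J := fun U hU => ⟨hU.1, fun h => hU.2 (hJJ' h)⟩
    have hN := ih J' (hJ.sup T) (fun U hU => hd U (hsub hU)) (by
      have : monoPoset K I J' ⊂ monoPoset K I J :=
        Set.ssubset_iff_exists.2 ⟨hsub, T, hT, fun h => h.2 hTJ'⟩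
      have := Set.ncard_lt_ncard this
      omega)
    let Q := Ideal.span (X '' ((T : Set (Fin n))ᶜ) : Set (MvPolynomial (Fin n) K))
    have hL : Van (X : Fin n → MvPolynomial (Fin n) K) (MvPolynomial (Fin n) K ⧸ Q) d :=
      fun i hi => van_vars T i (lt_of_lt_of_le hi (hd T hT))
    let ι0 : MvPolynomial (Fin n) K →ₗ[MvPolynomial (Fin n) K] idealQuot I J :=
      (Submodule.mkQ _) ∘ₗ LinearMap.toSpanSingleton _ I ⟨sqMon K T, hT.1⟩
    have hι0 : ∀ p, ι0 p = 0 ↔ p * sqMon K T ∈ J := by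
      intro p
      simp only [ι0, LinearMap.comp_apply, Submodule.mkQ_apply, Submodule.Quotient.mk_eq_zero]
      rfl
    have hQ : Q ≤ LinearMap.ker ι0 := by
      refine Ideal.span_le.2 ?_
      rintro _ ⟨j, hj, rfl⟩
      have hj : j ∉ T := hj
      change ι0 (X j) = 0
      rw [hι0]
      have : X j * sqMon K T = sqMon K (insert j T) := by
        unfold sqMon; rw [prod_insert hj]
      rw [this]
      by_contra hc
      have := hmax (insert j T) ⟨sq_mono hT.1 (subset_insert _ _), hc⟩
      rw [card_insert_of_notMem hj] at this
      omega
    refine van_ext X (Submodule.liftQ Q ι0 hQ) ?_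
      (Submodule.mapQ _ _ LinearMap.id (fun p hp => hJJ' hp) : idealQuot I J →ₗ[_] idealQuot I J')
      ?_ ?_ hL hN
    · rw [← LinearMap.ker_eq_bot, eq_bot_iff]
      intro p
      induction p using Submodule.Quotient.induction_on with | _ p
      rw [LinearMap.mem_ker, Submodule.liftQ_apply, hι0, Submodule.mem_bot,
        Submodule.Quotient.mk_eq_zero]
      intro h
      rw [mem_ideal_span_X_image]
      intro a ha
      by_contra! hc
      refine hT.2 ?_
      have := hJ.mem_iff.1 h (a + ind T) (by
        rw [mem_support_iff, sqMon_eq, coeff_mul_monomial, mul_one]; exact mem_support_iff.1 ha)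
      convert this using 2
      ext i
      have := hc i
      by_cases hi : i ∈ T
      · simp [hi, ind_apply]
      · simp [hi, ind_apply]
        exact this hi
    · intro p
      induction p using Submodule.Quotient.induction_on with | _ p
      exact ⟨Submodule.Quotient.mk p, by simp⟩
    · intro p
      induction p using Submodule.Quotient.induction_on with | _ p
      rw [Submodule.mapQ_apply, LinearMap.id_apply, Submodule.Quotient.mk_eq_zero]
      intro h
      have h : (p : MvPolynomial (Fin n) K) ∈ J ⊔ Ideal.span {sqMon K T} := h
      rw [Submodule.mem_sup] at h
      obtain ⟨y, hy, z, hz, hyz⟩ := h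
      obtain ⟨a, rfl⟩ := Ideal.mem_span_singleton.1 hz
      refine ⟨Submodule.Quotient.mk a, ?_⟩
      rw [Submodule.liftQ_apply]
      simp only [ι0, LinearMap.comp_apply, Submodule.mkQ_apply]
      rw [Submodule.Quotient.eq, ← neg_mem_iff]
      change -(a * sqMon K T - (p : MvPolynomial (Fin n) K)) ∈ J
      rw [← hyz]
      convert hy using 1
      ring

end
end Kz

namespace Kz
open Finset RingTheory.Sequence
section
variable {K : Type} [Field K] {n : ℕ} {I J : Ideal (MvPolynomial (Fin n) K)}

lemma coeff_mI {d : ℕ} (hI : SF I) (hd : ∀ U, sqMon K U ∈ I → d ≤ #U) {T : Finset (Fin n)}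
    (hT : #T = d) {r : MvPolynomial (Fin n) K} (hr : r ∈ maxGraded K n) :
    ∀ q ∈ I, coeff (ind T) (r * q) = 0 := by
  unfold maxGraded at hr
  induction hr using Submodule.span_induction with
  | mem r h =>
    obtain ⟨j, rfl⟩ := h
    intro q hq
    rw [coeff_X_mul']
    split_ifs with hj
    · by_contra hc
      have := hd _ (hI.mem_iff.1 hq _ (mem_support_iff.2 hc))
      rw [ind_support] at hj
      have h2 : (ind T - Finsupp.single j 1).support ⊆ T.erase j := by
        intro i hi
        rw [Finsupp.mem_support_iff, Finsupp.tsub_apply, ind_apply, Finsupp.single_apply] at hi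
        rw [mem_erase]
        by_cases h1 : i = j
        · subst h1; simp [hj] at hi
        · refine ⟨h1, ?_⟩
          by_contra h3
          simp [h3] at hi
      have h3 := card_le_card h2
      have h4 := card_erase_add_one hj
      omega
    · rfl
  | zero => simp
  | add r s _ _ h1 h2 => intro q hq; rw [add_mul, coeff_add, h1 q hq, h2 q hq, add_zero]
  | smul a r _ h => intro q hq; rw [smul_eq_mul, mul_comm a, mul_assoc]; exact h _ (I.mul_mem_left _ hq)

lemma coeff_mM {d : ℕ} (hI : SF I) (hJ : SF J) (hd : ∀ U, sqMon K U ∈ I → d ≤ #U)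
    {T : Finset (Fin n)}
    (hT : #T = d) (hTJ : sqMon K T ∉ J) {u : idealQuot I J}
    (hu : u ∈ maxGraded K n • (⊤ : Submodule (MvPolynomial (Fin n) K) (idealQuot I J))) :
    ∀ p : I, Submodule.Quotient.mk p = u → coeff (ind T) (p : MvPolynomial (Fin n) K) = 0 := by
  induction hu using Submodule.smul_induction_on' with
  | smul r hr v hv =>
    intro p hp
    induction v using Submodule.Quotient.induction_on with | _ q
    rw [← Submodule.Quotient.mk_smul, Submodule.Quotient.eq] at hp
    have hp : (p : MvPolynomial (Fin n) K) - r * (q : MvPolynomial (Fin n) K) ∈ J := hp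
    have h1 := coeff_mI hI hd hT hr q q.2
    have h2 : coeff (ind T) ((p : MvPolynomial (Fin n) K) - r * (q : MvPolynomial (Fin n) K)) = 0 := by
      by_contra hc
      have := hJ.mem_iff.1 hp _ (mem_support_iff.2 hc)
      rw [ind_support] at this
      exact hTJ this
    rwa [coeff_sub, h1, sub_zero] at h2
  | add u hu v hv h1 h2 =>
    intro p hp
    obtain ⟨q, rfl⟩ := Submodule.Quotient.mk_surjective _ u
    have h3 := h1 q rfl
    have h4 := h2 (p - q) (by rw [Submodule.Quotient.mk_sub, hp]; simp)
    rw [AddSubgroupClass.coe_sub, coeff_sub, h3, sub_zero] at h4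
    exact h4

open Classical in
noncomputable def ee (I J : Ideal (MvPolynomial (Fin n) K)) (T : Finset (Fin n)) : idealQuot I J :=
  if h : sqMon K T ∈ I then Submodule.Quotient.mk ⟨sqMon K T, h⟩ else 0

lemma ee_zero {T : Finset (Fin n)} (h : T ∉ monoPoset K I J) : ee I J T = 0 := by
  unfold ee
  split_ifs with h1
  · rw [Submodule.Quotient.mk_eq_zero]
    by_contra h2
    exact h ⟨h1, h2⟩
  · rfl

lemma X_ee {T : Finset (Fin n)} {j : Fin n} (hj : j ∈ T) (h : sqMon K (T.erase j) ∈ I) :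
    (X j : MvPolynomial (Fin n) K) • ee I J (T.erase j) = ee I J T := by
  unfold ee
  rw [dif_pos h, dif_pos (sq_mono h (erase_subset _ _)), ← Submodule.Quotient.mk_smul]
  congr 1
  ext1
  change X j * sqMon K (T.erase j) = sqMon K T
  unfold sqMon
  rw [mul_prod_erase _ _ hj]

lemma C_sg (j : Fin n) (T : Finset (Fin n)) :
    (C (sg K j T) : MvPolynomial (Fin n) K) = sg (MvPolynomial (Fin n) K) j T := by
  simp [sg]

lemma not_van {d : ℕ} (hI : SF I) (hJ : SF J) (hd : ∀ U, sqMon K U ∈ I → d ≤ #U)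
    (c : Finset (Fin n) → K) (hc : ∀ T, c T ≠ 0 → T ∈ monoPoset K I J ∧ #T = d)
    (T₀ : Finset (Fin n)) (hT₀ : c T₀ ≠ 0)
    (hs : ∀ T ∈ monoPoset K I J, #T = d + 1 → ∑ j ∈ T, sg K j T * c (T.erase j) = 0)
    {k : ℕ} (hk : d < k) (hV : Van (X : Fin n → MvPolynomial (Fin n) K) (idealQuot I J) k) :
    False := by
  obtain ⟨g, -, hg⟩ := hV d hk (fun T => (C (c T) : MvPolynomial (Fin n) K) • ee I J T)
    (by
      intro T hT
      have : c T = 0 := by by_contra h; exact hT (hc T h).2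
      simp [this])
    (by
      ext T
      rw [kd_apply]
      have h1 : ∀ j ∈ T, (sg (MvPolynomial (Fin n) K) j T * X j) •
          (C (c (T.erase j)) : MvPolynomial (Fin n) K) • ee I J (T.erase j) =
          (C (sg K j T * c (T.erase j)) : MvPolynomial (Fin n) K) • ee I J T := by
        intro j hj
        by_cases h : c (T.erase j) = 0
        · simp [h]
        · rw [← X_ee hj (hc _ h).1.1, smul_smul, smul_smul, C_mul, C_sg]
          congr 1; ring
      rw [sum_congr rfl h1, ← sum_smul, ← map_sum]
      by_cases hP : T ∈ monoPoset K I J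
      · by_cases hT : #T = d + 1
        · rw [hs T hP hT]; simp
        · rw [sum_eq_zero]
          · simp
          · intro j hj
            have : c (T.erase j) = 0 := by
              by_contra h
              have := (hc _ h).2
              have := card_erase_add_one hj
              omega
            rw [this, mul_zero]
      · rw [ee_zero hP, smul_zero]; rfl)
  have h0 := hc T₀ hT₀
  have hg := congrFun hg T₀
  have hmem : (C (c T₀) : MvPolynomial (Fin n) K) • ee I J T₀ ∈
      maxGraded K n • (⊤ : Submodule (MvPolynomial (Fin n) K) (idealQuot I J)) := by
    rw [← hg, kd_apply]
    refine sum_mem fun j _ => Submodule.smul_mem_smul ?_ trivial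
    exact Ideal.mul_mem_left _ _ (Ideal.subset_span ⟨j, rfl⟩)
  have := coeff_mM hI hJ hd h0.2 h0.1.2 hmem
    ((C (c T₀) : MvPolynomial (Fin n) K) • (⟨sqMon K T₀, h0.1.1⟩ : I)) (by
    unfold ee
    rw [dif_pos h0.1.1, Submodule.Quotient.mk_smul])
  change coeff (ind T₀) (C (c T₀) * sqMon K T₀) = 0 at this
  rw [sqMon_eq, coeff_C_mul, coeff_monomial, if_pos rfl, mul_one] at this
  exact hT₀ this

lemma exists_cocycle (P : Set (Finset (Fin n))) (d : ℕ) (A N : Finset (Finset (Fin n)))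
    (hA : ∀ T ∈ A, T ∈ P ∧ #T = d)
    (hN : ∀ T ∈ P, #T = d + 1 → (∃ U ∈ A, U ⊆ T) → T ∈ N) (hcard : #N < #A) :
    ∃ c : Finset (Fin n) → K, (∀ T, c T ≠ 0 → T ∈ P ∧ #T = d) ∧ (∃ T, c T ≠ 0) ∧
      ∀ T ∈ P, #T = d + 1 → ∑ j ∈ T, sg K j T * c (T.erase j) = 0 := by
  let e : (A → K) → Finset (Fin n) → K := fun v U => if h : U ∈ A then v ⟨U, h⟩ else 0
  let F : (A → K) →ₗ[K] (N → K) :=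
    { toFun := fun v T => ∑ j ∈ T.1, sg K j T.1 * e v (T.1.erase j)
      map_add' := by
        intro v w; ext T
        rw [Pi.add_apply, ← sum_add_distrib]
        refine sum_congr rfl fun j _ => ?_
        rw [← mul_add]; congr 1
        simp only [e]; split_ifs <;> simp
      map_smul' := by
        intro r v; ext T
        rw [Pi.smul_apply, RingHom.id_apply, smul_eq_mul, mul_sum]
        refine sum_congr rfl fun j _ => ?_
        simp only [e]; split_ifs <;> simp
        ring }
  have hF : LinearMap.ker F ≠ ⊥ := LinearMap.ker_ne_bot_of_finrank_lt (by simpa using hcard)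
  obtain ⟨v, hv, hv0⟩ := (Submodule.ne_bot_iff _).1 hF
  rw [LinearMap.mem_ker] at hv
  obtain ⟨a, ha⟩ := Function.ne_iff.1 hv0
  refine ⟨e v, ?_, ⟨a.1, by simpa [e] using ha⟩, ?_⟩
  · intro T hT
    by_cases h : T ∈ A
    · exact hA T h
    · simp [e, h] at hT
  · intro T hT hTd
    by_cases h : T ∈ N
    · exact congrFun hv ⟨T, h⟩
    · refine sum_eq_zero fun j _ => ?_
      have : T.erase j ∉ A := fun h' => h (hN T hT hTd ⟨_, h', erase_subset _ _⟩)
      simp [e, this]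

lemma hall (P : Set (Finset (Fin n))) (d : ℕ) (hP : ∀ T ∈ P, d ≤ #T)
    (hno : ¬ ∃ C, IntervalPartition P C ∧ ∀ p ∈ C, d + 1 ≤ #p.2) :
    ∃ A N : Finset (Finset (Fin n)), (∀ T ∈ A, T ∈ P ∧ #T = d) ∧
    (∀ T ∈ P, #T = d + 1 → (∃ U ∈ A, U ⊆ T) → T ∈ N) ∧ #N < #A := by
  classical
  let t : {T // T ∈ P ∧ #T = d} → Finset (Finset (Fin n)) := fun T =>
    univ.filter fun T' => T' ∈ P ∧ #T' = d + 1 ∧ T.1 ⊆ T'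
  by_cases hH : ∀ s : Finset {T // T ∈ P ∧ #T = d}, #s ≤ #(s.biUnion t)
  · exfalso
    apply hno
    obtain ⟨φ, hφ, hφt⟩ := (all_card_le_biUnion_card_iff_exists_injective t).1 hH
    have hφt : ∀ T, φ T ∈ P ∧ #(φ T) = d + 1 ∧ T.1 ⊆ φ T := fun T => by
      simpa [t] using hφt T
    have key : ∀ (T : {T // T ∈ P ∧ #T = d}) (U : Finset (Fin n)), T.1 ⊆ U → U ⊆ φ T →
        U = T.1 ∨ U = φ T := by
      intro T U h1 h2
      have := (hφt T).2.1
      have h3 := card_le_card h1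
      have h4 := card_le_card h2
      have h5 := T.2.2
      by_cases h : #U = d
      · left; exact (eq_of_subset_of_card_le h1 (by omega)).symm
      · right; exact eq_of_subset_of_card_le h2 (by omega)
    refine ⟨univ.filter fun p => (∃ T, p = (T.1, φ T)) ∨
      (p.1 = p.2 ∧ p.1 ∈ P ∧ d + 1 ≤ #p.1 ∧ ∀ T, φ T ≠ p.1), ⟨?_, ?_⟩, ?_⟩
    · intro p hp
      rw [mem_filter] at hp
      rcases hp.2 with ⟨T, rfl⟩ | ⟨h1, h2, -, -⟩
      · exact ⟨T.2.1, (hφt T).1, (hφt T).2.2⟩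
      · exact ⟨h2, h1 ▸ h2, h1 ▸ Subset.rfl⟩
    · intro U hU
      by_cases hUd : #U = d
      · refine ⟨(U, φ ⟨U, hU, hUd⟩), ⟨?_, Subset.rfl, (hφt ⟨U, hU, hUd⟩).2.2⟩, ?_⟩
        · rw [mem_filter]; exact ⟨mem_univ _, Or.inl ⟨⟨U, hU, hUd⟩, rfl⟩⟩
        · rintro p ⟨hp, h1, h2⟩
          rw [mem_filter] at hp
          rcases hp.2 with ⟨T, rfl⟩ | ⟨h3, h4, h5, -⟩
          · rcases key T U h1 h2 with h | h
            · obtain ⟨T, hT⟩ := T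
              simp only at h
              subst h; rfl
            · have := (hφt T).2.1
              rw [← h] at this; omega
          · have := card_le_card h1; omega
      · have hUd' : d + 1 ≤ #U := by have := hP U hU; omega
        by_cases hr : ∃ T, φ T = U
        · obtain ⟨T, rfl⟩ := hr
          refine ⟨(T.1, φ T), ⟨?_, (hφt T).2.2, Subset.rfl⟩, ?_⟩
          · rw [mem_filter]; exact ⟨mem_univ _, Or.inl ⟨T, rfl⟩⟩
          · rintro p ⟨hp, h1, h2⟩
            rw [mem_filter] at hp
            rcases hp.2 with ⟨T', rfl⟩ | ⟨h3, h4, h5, h6⟩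
            · rcases key T' _ h1 h2 with h | h
              · have := T'.2.2
                rw [← h] at this; omega
              · rw [hφ h]
            · exact absurd (subset_antisymm (h3 ▸ h2) h1) (h6 T)
        · push Not at hr
          refine ⟨(U, U), ⟨?_, Subset.rfl, Subset.rfl⟩, ?_⟩
          · rw [mem_filter]; exact ⟨mem_univ _, Or.inr ⟨rfl, hU, hUd', hr⟩⟩
          · rintro ⟨p, q⟩ ⟨hp, h1, h2⟩
            rw [mem_filter] at hp
            rcases hp.2 with ⟨T', h⟩ | ⟨h3, h4, h5, h6⟩
            · obtain ⟨rfl, rfl⟩ := Prod.mk.inj h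
              rcases key T' _ h1 h2 with h | h
              · have := T'.2.2
                rw [← h] at this; omega
              · exact absurd h.symm (hr T')
            · simp only at h1 h2 h3
              subst h3
              rw [subset_antisymm h1 h2]
    · intro p hp
      rw [mem_filter] at hp
      rcases hp.2 with ⟨T, rfl⟩ | ⟨h1, -, h2, -⟩
      · exact (hφt T).2.1.ge
      · rwa [← h1]
  · push Not at hH
    obtain ⟨s, hs⟩ := hH
    refine ⟨s.image Subtype.val, s.biUnion t, ?_, ?_, ?_⟩
    · intro T hT
      obtain ⟨U, -, rfl⟩ := mem_image.1 hT
      exact U.2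
    · rintro T hT hTd ⟨U, hU, hUT⟩
      obtain ⟨U, hU', rfl⟩ := mem_image.1 hU
      exact mem_biUnion.2 ⟨U, hU', by simp [t, hT, hTd, hUT]⟩
    · rwa [card_image_of_injective _ Subtype.val_injective]

end
end Kz

/-- Theorem 4.3: Stanley's conjecture for modules of minimal
Stanley depth. -/
theorem stmt_18 (n : ℕ) (K : Type) [Field K] (d : ℕ) (hd : 0 < d)
    (I J : Ideal (MvPolynomial (Fin n) K)) (hJI : J < I)
    (hI : GenBySqMonOfDeg K (fun k => d ≤ k) I)
    (hJ : GenBySqMonOfDeg K (fun _ => True) J)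
    (hrho : 0 < rho K d I)
    (hsd : sdepthQuot K I J = d) :
    moduleDepth (maxGraded K n) (idealQuot I J) = (d : ℕ∞) := by
  classical
  have hdeg : ∀ U, sqMon K U ∈ I → d ≤ U.card := by
    obtain ⟨G, hG, rfl⟩ := hI
    intro U hU
    obtain ⟨T, hT, hTU⟩ := Kz.sq_mem_span.1 hU
    exact (hG T hT).trans (Finset.card_le_card hTU)
  have hI' : Kz.SF I := by
    obtain ⟨G, -, h⟩ := hI
    exact ⟨G, fun _ _ => trivial, h⟩
  have hne : (monoPoset K I J).Nonempty := by
    by_contra h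
    rw [Set.not_nonempty_iff_eq_empty] at h
    refine hJI.not_ge fun p hp => ?_
    rw [Kz.SF.mem_iff hJ]
    intro a ha
    by_contra hc
    have : a.support ∈ monoPoset K I J := ⟨(Kz.SF.mem_iff hI').1 hp a ha, hc⟩
    rw [h] at this
    exact this
  have hno : ¬ ∃ C, IntervalPartition (monoPoset K I J) C ∧ ∀ p ∈ C, d + 1 ≤ p.2.card := by
    intro h
    have hb : BddAbove {d : ℕ | ∃ C, IntervalPartition (monoPoset K I J) C ∧
        ∀ p ∈ C, d ≤ p.2.card} := by
      refine ⟨n, ?_⟩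
      rintro e ⟨C, hC, he⟩
      obtain ⟨T, hT⟩ := hne
      obtain ⟨p, hp, -⟩ := hC.2 T hT
      refine (he p hp.1).trans ?_
      simpa using Finset.card_le_univ p.2
    have := le_csSup hb h
    unfold sdepthQuot at hsd
    omega
  obtain ⟨A, N, hA, hN, hAN⟩ := Kz.hall (monoPoset K I J) d (fun T hT => hdeg T hT.1) hno
  obtain ⟨c, hc, ⟨T₀, hT₀⟩, hs⟩ := Kz.exists_cocycle (K := K) (monoPoset K I J) d A N hA hN hAN
  refine le_antisymm (sSup_le ?_) (le_sSup ?_)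
  · rintro k ⟨rs, rfl, hrs, hreg⟩
    by_contra hlt
    rw [not_le, Nat.cast_lt] at hlt
    exact Kz.not_van hI' hJ hdeg c hc T₀ hT₀ hs hlt
      (Kz.van_of_reg X rs (idealQuot I J) hrs hreg.toIsWeaklyRegular)
  · obtain ⟨rs, h1, h2, h3⟩ := Kz.exists_reg X d (idealQuot I J)
      (Kz.van_idealQuot d hI' _ J hJ (fun T hT => hdeg T hT.1) le_rfl)
    refine ⟨rs, by rw [h1], h2, ⟨h3, ?_⟩⟩
    intro htop
    have h0 := hc T₀ hT₀
    have hle : Ideal.ofList rs ≤ maxGraded K n := Ideal.span_le.2 h2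
    have hmem : (Submodule.Quotient.mk ⟨sqMon K T₀, h0.1.1⟩ : idealQuot I J) ∈
        maxGraded K n • (⊤ : Submodule (MvPolynomial (Fin n) K) (idealQuot I J)) :=
      Submodule.smul_mono_left hle (htop ▸ trivial)
    have := Kz.coeff_mM hI' hJ hdeg h0.2 h0.1.2 hmem _ rfl
    change coeff (Kz.ind T₀) (sqMon K T₀) = 0 at this
    rw [Kz.sqMon_eq, coeff_monomial, if_pos rfl] at this
    exact one_ne_zero this
end
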